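/- arXiv:1506.00741 — 9 statements merged into one kernel-verified Lean document; each statement's English description precedes it below -/
import Mathlib

section
/- Let X be a finite-dimensional real inner product space, M a self-adjoint positive definite continuous linear operator on X with positive square root M^{1/2} and inverse square root M^{−1/2}, and let l ∈ X and p : X → EReal. Suppose x⁺, x̄, d ∈ X are such that p(x⁺) and p(x̄) are finite and (a) for all x ∈ X, p(x) ≥ p(x⁺) + ⟨d + l − M x⁺, x − x⁺⟩, and (b) for all x ∈ X, p(x) ≥ p(x̄) + ⟨l − M x̄, x − x̄⟩ (inequalities in EReal, with the real inner-product terms coerced). Then ⟨x⁺ − x̄, M(x⁺ − x̄)⟩ ≤ ⟨d, x⁺ − x̄⟩, and consequently ‖M^{1/2}(x⁺ − x̄)‖ ≤ ‖M^{−1/2} d‖. -/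
/-!
Testing each subgradient inequality at the other point and adding them cancels the finite values
of `p` and gives `0 ≤ ⟪d - M w, w⟫` for `w = xp - xb`, which is the first claim. Since
`⟪w, M w⟫ = ‖Msqrt w‖ ^ 2` and `⟪d, w⟫ = ⟪Minvsqrt d, Msqrt w⟫`, the second follows by
Cauchy–Schwarz.
-/

open scoped RealInnerProductSpace

/-- Proposition 1 (x-part): let `M` be self-adjoint positive definite on a finite-dimensional
real inner product space `X`, with positive square root `Msqrt` and inverse square root
`Minvsqrt`, and let `p : X → EReal`.  If `d + l − M x⁺` is a subgradient of `p` at `x⁺` and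
`l − M x̄` is a subgradient of `p` at `x̄`, then
`⟪x⁺ − x̄, M(x⁺ − x̄)⟫ ≤ ⟪d, x⁺ − x̄⟫` and `‖Msqrt (x⁺ − x̄)‖ ≤ ‖Minvsqrt d‖`. -/
theorem stmt_3 {X : Type*}
    [NormedAddCommGroup X] [InnerProductSpace ℝ X] [FiniteDimensional ℝ X]
    (M Msqrt Minvsqrt : X →L[ℝ] X)
    (hM_sa : ∀ u v : X, ⟪M u, v⟫ = ⟪u, M v⟫)
    (hM_pos : ∀ u : X, u ≠ 0 → 0 < ⟪u, M u⟫)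
    (hMsqrt_sa : ∀ u v : X, ⟪Msqrt u, v⟫ = ⟪u, Msqrt v⟫)
    (hMsqrt_psd : ∀ u : X, 0 ≤ ⟪u, Msqrt u⟫)
    (hMsqrt_sq : Msqrt ∘L Msqrt = M)
    (hMinv1 : Minvsqrt ∘L Msqrt = ContinuousLinearMap.id ℝ X)
    (hMinv2 : Msqrt ∘L Minvsqrt = ContinuousLinearMap.id ℝ X)
    (l : X) (p : X → EReal) (xp xb d : X)
    (hxp_fin : p xp ≠ ⊤ ∧ p xp ≠ ⊥) (hxb_fin : p xb ≠ ⊤ ∧ p xb ≠ ⊥)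
    (ha : ∀ x : X, p xp + ((⟪d + l - M xp, x - xp⟫ : ℝ) : EReal) ≤ p x)
    (hb : ∀ x : X, p xb + ((⟪l - M xb, x - xb⟫ : ℝ) : EReal) ≤ p x) :
    ⟪xp - xb, M (xp - xb)⟫ ≤ ⟪d, xp - xb⟫ ∧ ‖Msqrt (xp - xb)‖ ≤ ‖Minvsqrt d‖ := by
  have key : ⟪xp - xb, M (xp - xb)⟫ ≤ ⟪d, xp - xb⟫ := by
    have h1 := ha xb
    have h2 := hb xp
    -- Both values of `p` are finite, so the two subgradient inequalities hold in `ℝ`.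
    lift p xp to ℝ using hxp_fin with a
    lift p xb to ℝ using hxb_fin with b
    norm_cast at h1 h2
    -- Their sum is monotonicity of the subdifferential: `0 ≤ ⟪d - M w, w⟫` for `w = xp - xb`.
    have h3 : ⟪d + l - M xp, xb - xp⟫ + ⟪l - M xb, xp - xb⟫
        = ⟪xp - xb, M (xp - xb)⟫ - ⟪d, xp - xb⟫ := by
      rw [← hM_sa, ← neg_sub xp xb, inner_neg_right, map_sub]
      simp only [inner_sub_left, inner_add_left]
      ring
    linarith
  refine ⟨key, ?_⟩
  have hsq : ⟪xp - xb, M (xp - xb)⟫ = ‖Msqrt (xp - xb)‖ ^ 2 := by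
    rw [← hMsqrt_sq, ContinuousLinearMap.comp_apply, ← hMsqrt_sa, real_inner_self_eq_norm_sq]
  have hd : ⟪d, xp - xb⟫ = ⟪Minvsqrt d, Msqrt (xp - xb)⟫ := by
    rw [← hMsqrt_sa, ← ContinuousLinearMap.comp_apply, hMinv2, ContinuousLinearMap.id_apply]
  have hcs := real_inner_le_norm (Minvsqrt d) (Msqrt (xp - xb))
  -- `‖Msqrt w‖ ^ 2 ≤ ‖Minvsqrt d‖ * ‖Msqrt w‖`; cancel one factor.
  rw [hsq, hd] at key
  by_contra! hlt
  nlinarith [norm_nonneg (Minvsqrt d), norm_nonneg (Msqrt (xp - xb))]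
end

section
/- Let X, Y, Z be finite-dimensional real inner product spaces, M a self-adjoint positive definite continuous linear operator on X, N a self-adjoint positive definite continuous linear operator on Y, A : X → Z and B : Y → Z continuous linear maps, σ > 0, l ∈ Y, and q : Y → EReal. Suppose y⁺, ȳ, d ∈ Y and x⁺, x̄ ∈ X are such that q(y⁺) and q(ȳ) are finite and (a) for all y ∈ Y, q(y) ≥ q(y⁺) + ⟨d + l − N y⁺, y − y⁺⟩, and (b) for all y ∈ Y, q(y) ≥ q(ȳ) + ⟨l − σ B*(A(x̄ − x⁺)) − N ȳ, y − ȳ⟩. If ε ≥ 0 satisfies ‖N^{−1/2} d‖ ≤ ε and ‖M^{1/2}(x⁺ − x̄)‖ ≤ ε, then ‖N^{1/2}(y⁺ − ȳ)‖ ≤ (1 + σ·‖N^{−1/2} ∘ B* ∘ A ∘ M^{−1/2}‖) · ε, where the norm of the composite operator is the operator norm. -/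
open scoped RealInnerProductSpace
open ContinuousLinearMap

/-!
Adding the two subgradient inequalities, the first evaluated at `yb` and the second at `yp`, cancels
`q` (this is monotonicity of the subdifferential) and leaves, with `e = yp - yb` and
`w = B* A (xb - xp)`, the inequality `⟪N e, e⟫ ≤ ⟪d + σ w, e⟫`. Writing `N` and the identity through
`N^{1/2}` turns this into `‖N^{1/2} e‖² ≤ ⟪N^{-1/2} (d + σ w), N^{1/2} e⟫`, so Cauchy-Schwarz gives
`‖N^{1/2} e‖ ≤ ‖N^{-1/2} d‖ + σ ‖N^{-1/2} w‖`. Finally `N^{-1/2} w = -T (M^{1/2} (xp - xb))` for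
`T = N^{-1/2} B* A M^{-1/2}`, which bounds the last norm by `‖T‖ ε`.
-/

/-- The two-point form of monotonicity of the subdifferential. Finiteness of `q` at both points is
what allows its values to cancel in `EReal`. -/
lemma add_inner_nonpos_of_subgradients {Y : Type*} [NormedAddCommGroup Y] [InnerProductSpace ℝ Y]
    {q : Y → EReal} {y₁ y₂ g₁ g₂ : Y}
    (h₁ : q y₁ ≠ ⊤ ∧ q y₁ ≠ ⊥) (h₂ : q y₂ ≠ ⊤ ∧ q y₂ ≠ ⊥)
    (hg₁ : q y₁ + ((⟪g₁, y₂ - y₁⟫ : ℝ) : EReal) ≤ q y₂)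
    (hg₂ : q y₂ + ((⟪g₂, y₁ - y₂⟫ : ℝ) : EReal) ≤ q y₁) :
    ⟪g₁, y₂ - y₁⟫ + ⟪g₂, y₁ - y₂⟫ ≤ 0 := by
  rw [← EReal.coe_toReal h₁.1 h₁.2, ← EReal.coe_toReal h₂.1 h₂.2] at hg₁ hg₂
  norm_cast at hg₁ hg₂
  linarith

lemma norm_le_of_inner_self_le {Y : Type*} [NormedAddCommGroup Y] [InnerProductSpace ℝ Y]
    {u v : Y} (h : ⟪u, u⟫ ≤ ⟪v, u⟫) : ‖u‖ ≤ ‖v‖ := by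
  rw [real_inner_self_eq_norm_mul_norm] at h
  have hcs := h.trans (real_inner_le_norm v u)
  rcases (norm_nonneg u).eq_or_lt with h0 | h0
  · rw [← h0]
    exact norm_nonneg v
  · exact le_of_mul_le_mul_right hcs h0

/-- Proposition 1 (y-part): with `M ≻ 0` on `X`, `N ≻ 0` on `Y` (with square roots and inverse
square roots as given), `A : X → Z`, `B : Y → Z`, `σ > 0`, if `d` is a subgradient at `y⁺` of
`φ(y) := q(y) + (1/2)⟪y, Ny⟫ − ⟪l, y⟫` and `ȳ` minimizes
`φ(y) + ⟪σ B*(A(x̄ − x⁺)), y⟫`, and `‖N^{−1/2} d‖ ≤ ε`, `‖M^{1/2}(x⁺ − x̄)‖ ≤ ε`, then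
`‖N^{1/2}(y⁺ − ȳ)‖ ≤ (1 + σ‖N^{−1/2} B* A M^{−1/2}‖) ε`. -/
theorem stmt_4 {X Y Z : Type*}
    [NormedAddCommGroup X] [InnerProductSpace ℝ X] [FiniteDimensional ℝ X]
    [NormedAddCommGroup Y] [InnerProductSpace ℝ Y] [FiniteDimensional ℝ Y]
    [NormedAddCommGroup Z] [InnerProductSpace ℝ Z] [FiniteDimensional ℝ Z]
    (M Msqrt Minvsqrt : X →L[ℝ] X) (N Nsqrt Ninvsqrt : Y →L[ℝ] Y)
    (hM_sa : ∀ u v : X, ⟪M u, v⟫ = ⟪u, M v⟫)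
    (hM_pos : ∀ u : X, u ≠ 0 → 0 < ⟪u, M u⟫)
    (hMsqrt_sa : ∀ u v : X, ⟪Msqrt u, v⟫ = ⟪u, Msqrt v⟫)
    (hMsqrt_psd : ∀ u : X, 0 ≤ ⟪u, Msqrt u⟫)
    (hMsqrt_sq : Msqrt ∘L Msqrt = M)
    (hMinv1 : Minvsqrt ∘L Msqrt = ContinuousLinearMap.id ℝ X)
    (hMinv2 : Msqrt ∘L Minvsqrt = ContinuousLinearMap.id ℝ X)
    (hN_sa : ∀ u v : Y, ⟪N u, v⟫ = ⟪u, N v⟫)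
    (hN_pos : ∀ u : Y, u ≠ 0 → 0 < ⟪u, N u⟫)
    (hNsqrt_sa : ∀ u v : Y, ⟪Nsqrt u, v⟫ = ⟪u, Nsqrt v⟫)
    (hNsqrt_psd : ∀ u : Y, 0 ≤ ⟪u, Nsqrt u⟫)
    (hNsqrt_sq : Nsqrt ∘L Nsqrt = N)
    (hNinv1 : Ninvsqrt ∘L Nsqrt = ContinuousLinearMap.id ℝ Y)
    (hNinv2 : Nsqrt ∘L Ninvsqrt = ContinuousLinearMap.id ℝ Y)
    (A : X →L[ℝ] Z) (B : Y →L[ℝ] Z) (σ : ℝ) (hσ : 0 < σ)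
    (l : Y) (q : Y → EReal) (yp yb d : Y) (xp xb : X)
    (hyp_fin : q yp ≠ ⊤ ∧ q yp ≠ ⊥) (hyb_fin : q yb ≠ ⊤ ∧ q yb ≠ ⊥)
    (ha : ∀ y : Y, q yp + ((⟪d + l - N yp, y - yp⟫ : ℝ) : EReal) ≤ q y)
    (hb : ∀ y : Y,
      q yb + ((⟪l - σ • (ContinuousLinearMap.adjoint B) (A (xb - xp)) - N yb, y - yb⟫ : ℝ)
        : EReal) ≤ q y)
    (ε : ℝ) (hε : 0 ≤ ε)
    (hd : ‖Ninvsqrt d‖ ≤ ε) (hx : ‖Msqrt (xp - xb)‖ ≤ ε) :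
    ‖Nsqrt (yp - yb)‖
      ≤ (1 + σ * ‖Ninvsqrt ∘L (ContinuousLinearMap.adjoint B) ∘L A ∘L Minvsqrt‖) * ε := by
  set T := Ninvsqrt ∘L (ContinuousLinearMap.adjoint B) ∘L A ∘L Minvsqrt with hT
  set w := (ContinuousLinearMap.adjoint B) (A (xb - xp)) with hw
  have hmono := add_inner_nonpos_of_subgradients hyp_fin hyb_fin (ha yb) (hb yp)
  have hNS (v : Y) : N v = Nsqrt (Nsqrt v) := by rw [← hNsqrt_sq]; rfl
  have hSinv (v : Y) : Nsqrt (Ninvsqrt v) = v := DFunLike.congr_fun hNinv2 v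
  have hMinv (u : X) : Minvsqrt (Msqrt u) = u := DFunLike.congr_fun hMinv1 u
  have hTw : Ninvsqrt w = -T (Msqrt (xp - xb)) := by
    simp only [hT, hw, ContinuousLinearMap.comp_apply, hMinv]
    rw [← map_neg, ← map_neg, ← map_neg, neg_sub]
  have hTw_norm : ‖Ninvsqrt w‖ ≤ ‖T‖ * ε := by
    rw [hTw, norm_neg]
    exact (T.le_opNorm _).trans (mul_le_mul_of_nonneg_left hx (norm_nonneg T))
  have hr : ‖Ninvsqrt (d + σ • w)‖ ≤ (1 + σ * ‖T‖) * ε := by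
    rw [map_add, map_smul]
    have h1 := norm_add_le (Ninvsqrt d) (σ • Ninvsqrt w)
    rw [norm_smul, Real.norm_of_nonneg hσ.le] at h1
    have h2 := mul_le_mul_of_nonneg_left hTw_norm hσ.le
    linarith
  have henergy : ⟪Nsqrt (yp - yb), Nsqrt (yp - yb)⟫
      ≤ ⟪Ninvsqrt (d + σ • w), Nsqrt (yp - yb)⟫ := by
    rw [← hNsqrt_sa, ← hNsqrt_sa, hSinv, ← hNS]
    rw [← neg_sub yp yb, inner_neg_right, ← sub_eq_neg_add, ← inner_sub_left] at hmono
    rw [← sub_nonpos, ← inner_sub_left]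
    convert hmono using 2
    rw [map_sub]
    abel
  exact (norm_le_of_inner_self_le henergy).trans hr
end

section
/- Let E be a finite-dimensional real inner product space and let D, U be continuous linear operators on E with D self-adjoint and positive definite and D + U* injective (U* denoting the adjoint of U). Then (D + U) ∘ D^{−1} ∘ (D + U*) = D + U + U* + U ∘ D^{−1} ∘ U*, and this operator is self-adjoint and positive definite. -/
/-! Write `A = D + U`. Since `D` is self-adjoint, `A* = D + U*`, so `A D⁻¹ A*` is the congruence
of `D⁻¹` by `A*`: `⟪A D⁻¹ A* u, v⟫ = ⟪D⁻¹ A* u, A* v⟫`. Self-adjointness therefore comes from that of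
`D⁻¹`. For positivity put `y = D⁻¹ A* u`, so that `⟪u, A D⁻¹ A* u⟫ = ⟪D y, y⟫`; injectivity of `A*`
gives `y ≠ 0` when `u ≠ 0`. The formula for the product is its expansion with `D⁻¹ D = D D⁻¹ = 1`. -/

open scoped RealInnerProductSpace

/-- Proposition 2, first assertion (sGS decomposition): if `D` is self-adjoint positive
definite on `E` (with inverse `Dinv`) and `D + U*` is injective, then
`(D + U) D⁻¹ (D + U*) = D + U + U* + U D⁻¹ U*`, and this operator is self-adjoint and
positive definite. -/
theorem stmt_5 {E : Type*}
    [NormedAddCommGroup E] [InnerProductSpace ℝ E] [FiniteDimensional ℝ E]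
    (D U Dinv : E →L[ℝ] E)
    (hD_sa : ∀ u v : E, ⟪D u, v⟫ = ⟪u, D v⟫)
    (hD_pos : ∀ u : E, u ≠ 0 → 0 < ⟪u, D u⟫)
    (hDinv1 : Dinv ∘L D = ContinuousLinearMap.id ℝ E)
    (hDinv2 : D ∘L Dinv = ContinuousLinearMap.id ℝ E)
    (hinj : Function.Injective (D + ContinuousLinearMap.adjoint U)) :
    ((D + U) ∘L Dinv ∘L (D + ContinuousLinearMap.adjoint U)
        = D + U + ContinuousLinearMap.adjoint U
          + U ∘L Dinv ∘L ContinuousLinearMap.adjoint U) ∧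
    (∀ u v : E, ⟪((D + U) ∘L Dinv ∘L (D + ContinuousLinearMap.adjoint U)) u, v⟫
        = ⟪u, ((D + U) ∘L Dinv ∘L (D + ContinuousLinearMap.adjoint U)) v⟫) ∧
    (∀ u : E, u ≠ 0 →
      0 < ⟪u, ((D + U) ∘L Dinv ∘L (D + ContinuousLinearMap.adjoint U)) u⟫) := by
  have h1 : ∀ x, Dinv (D x) = x := fun x => DFunLike.congr_fun hDinv1 x
  have h2 : ∀ x, D (Dinv x) = x := fun x => DFunLike.congr_fun hDinv2 x
  have hDinv_sa : ∀ u v : E, ⟪Dinv u, v⟫ = ⟪u, Dinv v⟫ := fun u v => by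
    simpa only [h2] using (hD_sa (Dinv u) (Dinv v)).symm
  have hadj : ∀ u v : E, ⟪(D + U) u, v⟫ = ⟪u, (D + ContinuousLinearMap.adjoint U) v⟫ :=
    fun u v => by
      simp only [add_apply, inner_add_left, inner_add_right, hD_sa,
        ContinuousLinearMap.adjoint_inner_right]
  have hadj' : ∀ u v : E, ⟪u, (D + U) v⟫ = ⟪(D + ContinuousLinearMap.adjoint U) u, v⟫ :=
    fun u v => by rw [real_inner_comm, hadj, real_inner_comm]
  refine ⟨?_, fun u v => ?_, fun u hu => ?_⟩
  · ext x
    simp only [ContinuousLinearMap.comp_apply, add_apply, map_add, h1, h2]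
    abel
  · rw [ContinuousLinearMap.comp_apply, ContinuousLinearMap.comp_apply,
      ContinuousLinearMap.comp_apply, ContinuousLinearMap.comp_apply, hadj, hadj', hDinv_sa]
  · rw [ContinuousLinearMap.comp_apply, ContinuousLinearMap.comp_apply, hadj']
    have hy : Dinv ((D + ContinuousLinearMap.adjoint U) u) ≠ 0 := fun h => hu <| hinj <| by
      rw [map_zero, ← h2 ((D + ContinuousLinearMap.adjoint U) u), h, map_zero]
    have hpos := hD_pos _ hy
    rwa [h2, real_inner_comm] at hpos
end

section
/- Let E be a finite-dimensional real inner product space and let D, U be continuous linear operators on E with D self-adjoint positive definite and D + U bijective. Set Ĥ := (D + U) ∘ D^{−1} ∘ (D + U*), which is invertible. For δ, δ̃ ∈ E define d := δ + (U ∘ D^{−1})(δ − δ̃). Then ⟨d, Ĥ^{−1} d⟩ ≤ ( ‖D^{−1/2}(δ − δ̃)‖ + ‖D^{1/2}((D + U)^{−1} δ̃)‖ )², where D^{1/2} is the positive square root of D and D^{−1/2} its inverse. -/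
open scoped RealInnerProductSpace

/-!
Put `w = D⁻¹(δ − δ̃) + (D + U)⁻¹ δ̃`. Then `d = (D + U) w`, so `Ĥ (Ĥ⁻¹ d) = d` and the injectivity
of `D + U` give `(D + U*) (Ĥ⁻¹ d) = D w`. Moving `D + U` across the inner product,
`⟪d, Ĥ⁻¹ d⟫ = ⟪w, D w⟫ = ‖D^{1/2} w‖²`, and
`D^{1/2} w = D^{−1/2}(δ − δ̃) + D^{1/2}(D + U)⁻¹ δ̃`, so the bound is the triangle inequality.
-/

/-- Proposition 2, error estimate of the sGS decomposition: with `D` self-adjoint positive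
definite (inverse `Dinv`, square root `Dsqrt`, inverse square root `Dinvsqrt`), `D + U`
bijective with inverse `DUinv`, `Ĥ := (D + U) D⁻¹ (D + U*)` invertible with inverse `Hinv`,
and `d := δ + U D⁻¹ (δ − δ̃)`, one has
`⟪d, Ĥ⁻¹ d⟫ ≤ (‖D^{−1/2}(δ − δ̃)‖ + ‖D^{1/2}((D+U)⁻¹ δ̃)‖)²`. -/
theorem stmt_6 {E : Type*}
    [NormedAddCommGroup E] [InnerProductSpace ℝ E] [FiniteDimensional ℝ E]
    (D U Dinv Dsqrt Dinvsqrt DUinv Hinv : E →L[ℝ] E)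
    (hD_sa : ∀ u v : E, ⟪D u, v⟫ = ⟪u, D v⟫)
    (hD_pos : ∀ u : E, u ≠ 0 → 0 < ⟪u, D u⟫)
    (hDinv1 : Dinv ∘L D = ContinuousLinearMap.id ℝ E)
    (hDinv2 : D ∘L Dinv = ContinuousLinearMap.id ℝ E)
    (hDsqrt_sa : ∀ u v : E, ⟪Dsqrt u, v⟫ = ⟪u, Dsqrt v⟫)
    (hDsqrt_psd : ∀ u : E, 0 ≤ ⟪u, Dsqrt u⟫)
    (hDsqrt_sq : Dsqrt ∘L Dsqrt = D)
    (hDinvsqrt1 : Dinvsqrt ∘L Dsqrt = ContinuousLinearMap.id ℝ E)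
    (hDinvsqrt2 : Dsqrt ∘L Dinvsqrt = ContinuousLinearMap.id ℝ E)
    (hDUinv1 : DUinv ∘L (D + U) = ContinuousLinearMap.id ℝ E)
    (hDUinv2 : (D + U) ∘L DUinv = ContinuousLinearMap.id ℝ E)
    (hHinv1 : Hinv ∘L ((D + U) ∘L Dinv ∘L (D + ContinuousLinearMap.adjoint U))
        = ContinuousLinearMap.id ℝ E)
    (hHinv2 : ((D + U) ∘L Dinv ∘L (D + ContinuousLinearMap.adjoint U)) ∘L Hinv
        = ContinuousLinearMap.id ℝ E)
    (δ δt d : E) (hd : d = δ + (U ∘L Dinv) (δ - δt)) :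
    ⟪d, Hinv d⟫ ≤ (‖Dinvsqrt (δ - δt)‖ + ‖Dsqrt (DUinv δt)‖) ^ 2 := by
  have eDinv2 (x : E) : D (Dinv x) = x := DFunLike.congr_fun hDinv2 x
  have eSq (x : E) : Dsqrt (Dsqrt x) = D x := DFunLike.congr_fun hDsqrt_sq x
  have eIs1 (x : E) : Dinvsqrt (Dsqrt x) = x := DFunLike.congr_fun hDinvsqrt1 x
  have eDU1 (x : E) : DUinv ((D + U) x) = x := DFunLike.congr_fun hDUinv1 x
  have eDU2 (x : E) : (D + U) (DUinv x) = x := DFunLike.congr_fun hDUinv2 x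
  have eH : (D + U) (Dinv ((D + ContinuousLinearMap.adjoint U) (Hinv d))) = d :=
    DFunLike.congr_fun hHinv2 d
  obtain ⟨w, hw⟩ : ∃ w, w = Dinv (δ - δt) + DUinv δt := ⟨_, rfl⟩
  have hdw : d = (D + U) w := by
    rw [hw, map_add, eDU2, hd, add_apply, eDinv2,
      ContinuousLinearMap.comp_apply]
    abel
  have hDw : (D + ContinuousLinearMap.adjoint U) (Hinv d) = D w := by
    have h := congrArg DUinv (eH.trans hdw)
    rw [eDU1, eDU1] at h
    rw [← h, eDinv2]
  have hinner : ⟪d, Hinv d⟫ = ‖Dsqrt w‖ ^ 2 := by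
    calc ⟪d, Hinv d⟫ = ⟪(D + U) w, Hinv d⟫ := by rw [← hdw]
      _ = ⟪w, (D + ContinuousLinearMap.adjoint U) (Hinv d)⟫ := by
        rw [add_apply, add_apply, inner_add_left,
          inner_add_right, hD_sa, ContinuousLinearMap.adjoint_inner_right]
      _ = ‖Dsqrt w‖ ^ 2 := by
        rw [hDw, ← eSq, ← hDsqrt_sa, real_inner_self_eq_norm_sq]
  have hsqrt : Dsqrt w = Dinvsqrt (δ - δt) + Dsqrt (DUinv δt) := by
    rw [hw, map_add, ← eIs1 (Dsqrt (Dinv (δ - δt))), eSq, eDinv2]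
  rw [hinner, hsqrt]
  gcongr
  exact norm_add_le _ _
end

section
/- Let m ≥ 1 and let (E_i)_{i ∈ Fin m} be finite-dimensional real inner product spaces, with E the L²-product (PiLp 2) of the E_i. Let D, U be continuous linear operators on E with D self-adjoint positive definite and D + U bijective, and set Ĥ := (D + U) ∘ D^{−1} ∘ (D + U*). Let ε ≥ 0 and let δ, δ̃ ∈ E satisfy δ 0 = δ̃ 0 and ‖δ i‖ ≤ ε, ‖δ̃ i‖ ≤ ε for every i, and define d := δ + (U ∘ D^{−1})(δ − δ̃). Then ⟨d, Ĥ^{−1} d⟩ ≤ ( (2√(m − 1) · ‖D^{−1/2}‖ + √m · ‖D^{1/2} ∘ (D + U)^{−1}‖) · ε )², where ‖·‖ applied to operators denotes the operator norm. -/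
/-!
Put `z := (D+U)⁻¹ d`. Since `(D+U)* = D + U*`, the vector `y := Ĥ⁻¹ d` satisfies `(D+U*) y = D z`,
so `⟪d, Ĥ⁻¹ d⟫ = ⟪(D+U) z, y⟫ = ⟪z, D z⟫ = ‖D^{1/2} z‖²`.
Writing `U = (D+U) - D` gives `d = (D+U) D⁻¹ (δ - δ̃) + δ̃`, and therefore
`D^{1/2} z = D^{-1/2} (δ - δ̃) + D^{1/2} (D+U)⁻¹ δ̃`. The bound follows from the triangle inequality:
`δ - δ̃` has at most `m - 1` nonzero blocks, each of norm at most `2 ε`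
(`norm_le_sqrt_mul_of_block_eq_zero`), and `δ̃` has `m` blocks of norm at most `ε`
(`norm_le_sqrt_mul_of_block_le`).
-/

open scoped RealInnerProductSpace

theorem norm_le_sqrt_mul_of_block_le {m : ℕ} {E : Fin m → Type*}
    [∀ i, NormedAddCommGroup (E i)] (x : PiLp 2 E) {c : ℝ} (hc : 0 ≤ c)
    (hx : ∀ i, ‖x i‖ ≤ c) : ‖x‖ ≤ Real.sqrt m * c := by
  refine (sq_le_sq₀ (norm_nonneg _) (by positivity)).mp ?_
  rw [PiLp.norm_sq_eq_of_L2, mul_pow, Real.sq_sqrt (Nat.cast_nonneg m)]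
  calc ∑ i, ‖x i‖ ^ 2 ≤ ∑ _i : Fin m, c ^ 2 :=
        Finset.sum_le_sum fun i _ => pow_le_pow_left₀ (norm_nonneg _) (hx i) 2
    _ = m * c ^ 2 := by simp

theorem norm_le_sqrt_mul_of_block_eq_zero {m : ℕ} {E : Fin m → Type*}
    [∀ i, NormedAddCommGroup (E i)] (x : PiLp 2 E) {c : ℝ} (hc : 0 ≤ c)
    (j : Fin m) (hj : x j = 0) (hx : ∀ i, ‖x i‖ ≤ c) :
    ‖x‖ ≤ Real.sqrt ((m : ℝ) - 1) * c := by
  have hm : (1 : ℝ) ≤ m := by exact_mod_cast Nat.one_le_of_lt j.isLt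
  refine (sq_le_sq₀ (norm_nonneg _) (by positivity)).mp ?_
  rw [PiLp.norm_sq_eq_of_L2, mul_pow, Real.sq_sqrt (by linarith)]
  have hsum : ∑ i, ‖x i‖ ^ 2 = ∑ i ∈ Finset.univ.erase j, ‖x i‖ ^ 2 := by
    rw [← Finset.add_sum_erase _ _ (Finset.mem_univ j), hj]
    simp
  calc ∑ i, ‖x i‖ ^ 2 = ∑ i ∈ Finset.univ.erase j, ‖x i‖ ^ 2 := hsum
    _ ≤ ∑ _i ∈ Finset.univ.erase j, c ^ 2 :=
        Finset.sum_le_sum fun i _ => pow_le_pow_left₀ (norm_nonneg _) (hx i) 2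
    _ = (m - 1) * c ^ 2 := by
        rw [Finset.sum_const, Finset.card_erase_of_mem (Finset.mem_univ j), Finset.card_univ,
          Fintype.card_fin, nsmul_eq_mul, Nat.cast_sub (Nat.one_le_of_lt j.isLt), Nat.cast_one]

/-- Proposition 3, error bound `‖Ĥ^{−1/2} d‖ ≤ κ ε` in squared form: on the `L²`-product
`E := PiLp 2 E_i`, with `D` self-adjoint positive definite (inverse `Dinv`, square root
`Dsqrt`, inverse square root `Dinvsqrt`), `D + U` bijective with inverse `DUinv`, and
`Ĥ := (D+U) D⁻¹ (D+U*)` invertible with inverse `Hinv`, if the block vectors `δ, δ̃`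
have identical first blocks and block norms at most `ε`, then with
`d := δ + U D⁻¹ (δ − δ̃)` one has
`⟪d, Ĥ⁻¹ d⟫ ≤ ((2√(m−1)‖D^{−1/2}‖ + √m ‖D^{1/2}(D+U)⁻¹‖) ε)²`. -/
theorem stmt_8 (m : ℕ) (hm : 1 ≤ m) (E : Fin m → Type*)
    [∀ i, NormedAddCommGroup (E i)] [∀ i, InnerProductSpace ℝ (E i)]
    [∀ i, FiniteDimensional ℝ (E i)]
    (D U Dinv Dsqrt Dinvsqrt DUinv Hinv : PiLp 2 E →L[ℝ] PiLp 2 E)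
    (hD_sa : ∀ u v : PiLp 2 E, ⟪D u, v⟫ = ⟪u, D v⟫)
    (hD_pos : ∀ u : PiLp 2 E, u ≠ 0 → 0 < ⟪u, D u⟫)
    (hDinv1 : Dinv ∘L D = ContinuousLinearMap.id ℝ (PiLp 2 E))
    (hDinv2 : D ∘L Dinv = ContinuousLinearMap.id ℝ (PiLp 2 E))
    (hDsqrt_sa : ∀ u v : PiLp 2 E, ⟪Dsqrt u, v⟫ = ⟪u, Dsqrt v⟫)
    (hDsqrt_psd : ∀ u : PiLp 2 E, 0 ≤ ⟪u, Dsqrt u⟫)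
    (hDsqrt_sq : Dsqrt ∘L Dsqrt = D)
    (hDinvsqrt1 : Dinvsqrt ∘L Dsqrt = ContinuousLinearMap.id ℝ (PiLp 2 E))
    (hDinvsqrt2 : Dsqrt ∘L Dinvsqrt = ContinuousLinearMap.id ℝ (PiLp 2 E))
    (hDUinv1 : DUinv ∘L (D + U) = ContinuousLinearMap.id ℝ (PiLp 2 E))
    (hDUinv2 : (D + U) ∘L DUinv = ContinuousLinearMap.id ℝ (PiLp 2 E))
    (hHinv1 : Hinv ∘L ((D + U) ∘L Dinv ∘L (D + ContinuousLinearMap.adjoint U))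
        = ContinuousLinearMap.id ℝ (PiLp 2 E))
    (hHinv2 : ((D + U) ∘L Dinv ∘L (D + ContinuousLinearMap.adjoint U)) ∘L Hinv
        = ContinuousLinearMap.id ℝ (PiLp 2 E))
    (ε : ℝ) (hε : 0 ≤ ε) (δ δt d : PiLp 2 E)
    (h0 : δ ⟨0, hm⟩ = δt ⟨0, hm⟩)
    (hδ : ∀ i : Fin m, ‖δ i‖ ≤ ε) (hδt : ∀ i : Fin m, ‖δt i‖ ≤ ε)
    (hd : d = δ + (U ∘L Dinv) (δ - δt)) :
    ⟪d, Hinv d⟫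
      ≤ ((2 * Real.sqrt ((m : ℝ) - 1) * ‖Dinvsqrt‖
          + Real.sqrt m * ‖Dsqrt ∘L DUinv‖) * ε) ^ 2 := by
  have e1 : ∀ x, Dinv (D x) = x := fun x => DFunLike.congr_fun hDinv1 x
  have e2 : ∀ x, D (Dinv x) = x := fun x => DFunLike.congr_fun hDinv2 x
  have e3 : ∀ x, Dsqrt (Dsqrt x) = D x := fun x => DFunLike.congr_fun hDsqrt_sq x
  have e4 : ∀ x, Dinvsqrt (Dsqrt x) = x := fun x => DFunLike.congr_fun hDinvsqrt1 x
  have e5 : ∀ x, DUinv (D x + U x) = x := fun x => DFunLike.congr_fun hDUinv1 x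
  have e6 : ∀ x, D (DUinv x) + U (DUinv x) = x := fun x => DFunLike.congr_fun hDUinv2 x
  have e7 : D (Dinv (D (Hinv d) + ContinuousLinearMap.adjoint U (Hinv d)))
      + U (Dinv (D (Hinv d) + ContinuousLinearMap.adjoint U (Hinv d))) = d :=
    DFunLike.congr_fun hHinv2 d
  have hy : D (Hinv d) + ContinuousLinearMap.adjoint U (Hinv d) = D (DUinv d) := by
    have h := congrArg DUinv e7
    rw [e5] at h
    rw [← h, e2]
  have hquad : ⟪d, Hinv d⟫ = ‖Dsqrt (DUinv d)‖ ^ 2 := by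
    calc ⟪d, Hinv d⟫ = ⟪D (DUinv d) + U (DUinv d), Hinv d⟫ := by rw [e6]
      _ = ⟪DUinv d, D (Hinv d) + ContinuousLinearMap.adjoint U (Hinv d)⟫ := by
          rw [inner_add_left, inner_add_right, hD_sa, ContinuousLinearMap.adjoint_inner_right]
      _ = ⟪DUinv d, Dsqrt (Dsqrt (DUinv d))⟫ := by rw [hy, e3]
      _ = ‖Dsqrt (DUinv d)‖ ^ 2 := by rw [← hDsqrt_sa, real_inner_self_eq_norm_sq]
  have hsplit : d = (D (Dinv (δ - δt)) + U (Dinv (δ - δt))) + δt := by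
    rw [hd, e2, ContinuousLinearMap.comp_apply]
    abel
  have hinvsqrt : ∀ x, Dsqrt (Dinv x) = Dinvsqrt x := fun x => by
    rw [← e4 (Dsqrt (Dinv x)), e3, e2]
  have hz : Dsqrt (DUinv d) = Dinvsqrt (δ - δt) + (Dsqrt ∘L DUinv) δt := by
    rw [hsplit, map_add, e5, map_add, hinvsqrt, ContinuousLinearMap.comp_apply]
  have hdiff : ‖δ - δt‖ ≤ Real.sqrt ((m : ℝ) - 1) * (2 * ε) := by
    refine norm_le_sqrt_mul_of_block_eq_zero _ (by positivity) ⟨0, hm⟩ ?_ fun i => ?_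
    · rw [PiLp.sub_apply, h0, sub_self]
    · rw [PiLp.sub_apply]
      linarith [norm_sub_le (δ i) (δt i), hδ i, hδt i]
  have hδt_norm : ‖δt‖ ≤ Real.sqrt m * ε := norm_le_sqrt_mul_of_block_le _ hε hδt
  rw [hquad, hz]
  refine pow_le_pow_left₀ (norm_nonneg _) ?_ 2
  calc ‖Dinvsqrt (δ - δt) + (Dsqrt ∘L DUinv) δt‖
      ≤ ‖Dinvsqrt (δ - δt)‖ + ‖(Dsqrt ∘L DUinv) δt‖ := norm_add_le _ _
    _ ≤ ‖Dinvsqrt‖ * (Real.sqrt ((m : ℝ) - 1) * (2 * ε))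
        + ‖Dsqrt ∘L DUinv‖ * (Real.sqrt m * ε) :=
        add_le_add (Dinvsqrt.le_opNorm_of_le hdiff)
          ((Dsqrt ∘L DUinv).le_opNorm_of_le hδt_norm)
    _ = (2 * Real.sqrt ((m : ℝ) - 1) * ‖Dinvsqrt‖
          + Real.sqrt m * ‖Dsqrt ∘L DUinv‖) * ε := by ring
end

section
/- Let Y and Z be real inner product spaces, let H and P be self-adjoint continuous linear operators on Y with 0 ⪯ P ⪯ H (i.e. ⟨y, Py⟩ ≥ 0 and ⟨y, (H − P)y⟩ ≥ 0 for all y ∈ Y), let B : Z → Y be a continuous linear map, and let d, d', Δ, Δ' ∈ Y and ζ ∈ Z. If ⟨d − d' + P Δ' − B ζ + H(Δ − Δ'), Δ⟩ ≤ 0, then ⟨B ζ, Δ⟩ − ⟨d − d', Δ⟩ ≥ (1/2)⟨Δ, HΔ⟩ − (1/2)⟨Δ', HΔ'⟩. -/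
open scoped RealInnerProductSpace

/-- The key monotonicity estimate in the proof of Lemma 2: if `0 ⪯ P ⪯ H` are self-adjoint
operators on `Y`, `B : Z → Y` is linear and
`⟪d − d' + P Δ' − B ζ + H(Δ − Δ'), Δ⟫ ≤ 0`, then
`⟪B ζ, Δ⟫ − ⟪d − d', Δ⟫ ≥ (1/2)⟪Δ, HΔ⟫ − (1/2)⟪Δ', HΔ'⟫`. -/
theorem stmt_12 {Y Z : Type*}
    [NormedAddCommGroup Y] [InnerProductSpace ℝ Y]
    [NormedAddCommGroup Z] [InnerProductSpace ℝ Z]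
    (H P : Y →L[ℝ] Y) (B : Z →L[ℝ] Y)
    (hH_sa : ∀ u v : Y, ⟪H u, v⟫ = ⟪u, H v⟫)
    (hP_sa : ∀ u v : Y, ⟪P u, v⟫ = ⟪u, P v⟫)
    (hP_psd : ∀ u : Y, 0 ≤ ⟪u, P u⟫)
    (hHP_psd : ∀ u : Y, 0 ≤ ⟪u, (H - P) u⟫)
    (d d' Δ Δ' : Y) (ζ : Z)
    (hmono : ⟪d - d' + P Δ' - B ζ + H (Δ - Δ'), Δ⟫ ≤ 0) :
    (1 / 2) * ⟪Δ, H Δ⟫ - (1 / 2) * ⟪Δ', H Δ'⟫ ≤ ⟪B ζ, Δ⟫ - ⟪d - d', Δ⟫ := by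
  -- `Q = H - P` is positive semidefinite, so `0 ≤ ⟪Δ - Δ', Q (Δ - Δ')⟫` bounds the cross term:
  -- `⟪Δ', Q Δ⟫ ≤ (1/2)⟪Δ, Q Δ⟫ + (1/2)⟪Δ', Q Δ'⟫`, and `Q ⪯ H` because `0 ⪯ P`.
  have hQ := hHP_psd (Δ - Δ')
  have hPΔ := hP_psd Δ
  have hPΔ' := hP_psd Δ'
  have hH₁ := hH_sa Δ' Δ
  have hH₂ := hH_sa Δ Δ
  have hP₁ := hP_sa Δ' Δ
  have hH₃ : ⟪Δ, H Δ'⟫ = ⟪Δ', H Δ⟫ := by rw [real_inner_comm, hH_sa]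
  have hP₃ : ⟪Δ, P Δ'⟫ = ⟪Δ', P Δ⟫ := by rw [real_inner_comm, hP_sa]
  simp only [sub_apply, map_sub, inner_add_left, inner_sub_left,
    inner_sub_right] at hmono hQ ⊢
  linarith
end

section
/- Under the imsPADMM setup (see context), for every k ≥ 1 the following inequality holds: (1 − τ)σ‖r^{k+1}‖² + σ‖A x^{k+1} + B y^k − c‖² + 2α⟨d_y^{k−1} − d_y^k, Δy^k⟩ ≥ α̂σ(‖r^{k+1}‖² − ‖r^k‖²) + βσ‖r^{k+1}‖² + ((1 − α)σ/2)‖A(Δx^k)‖² − α⟨Δy^{k−1}, (Σ̂_g + T)(Δy^{k−1})⟩ + α⟨Δy^k, (Σ̂_g + T)(Δy^k)⟩ + ρ·α·σ‖B(Δy^k)‖². -/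
/-!
Write `r = r^k`, `r' = r^{k+1}`, `u = B Δy^k` and `P = Σ̂_g + T`.

The inexact minimality of `y^{k+1}`, together with the convexity of `q`, gives the variational
inequality `proxStep_variational`.  Its gradient term at step `k` is
`∇g(y^k) - P Δy^k + B*(z^k + σ r')`.  Adding the inequalities of steps `k` and `k - 1`, each tested
at the other's iterate, cancels `q`, and the multiplier update turns the difference of the
`B*`-terms into `σ (r' - (1 - τ) r)`.  The remaining gradient difference is bounded below by
`gradient_diff_lower_bound`, a cocoercivity-type estimate which replaces a mean value theorem for
`∇g`.  The outcome is
`σ ⟪r' - (1 - τ) r, u⟫ + ⟪d_y^{k-1} - d_y^k, Δy^k⟫ ≥ (‖Δy^k‖²_P - ‖Δy^{k-1}‖²_P) / 2`.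

After multiplication by `2 α`, only an inequality between quadratic forms in `r`, `r'`, `u` is left
(`residual_inequality`, with `A Δx^k = r - r' - u`).  It splits into the parallelogram bound
`‖A Δx^k‖² ≤ 2 ‖r' + u‖² + 2 ‖r‖²` with weight `1 - α ≥ 0`, and a perfect square with weight `α`:
`(1 - τ) ‖r + u‖²` if `τ ≤ 1`, and `((τ - 1) / τ) ‖r - τ u‖²` if `τ > 1`.
-/

open scoped RealInnerProductSpace

/-- First-order optimality for an inexact minimiser `y₁` of `q + ½⟪·, N ·⟫ - ⟪l, ·⟫`, tested at a
point `y₂` of the domain of `q`: compare with `y₁ + t (y₂ - y₁)` and let `t → 0`. -/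
lemma proxStep_variational {Y : Type*} [NormedAddCommGroup Y] [InnerProductSpace ℝ Y]
    (q : Y → EReal)
    (hq_conv : ∀ y y' : Y, ∀ t : ℝ, 0 ≤ t → t ≤ 1 →
      q (t • y + (1 - t) • y') ≤ (t : EReal) * q y + ((1 - t : ℝ) : EReal) * q y')
    (N : Y →L[ℝ] Y) (hN : ∀ u v : Y, ⟪N u, v⟫ = ⟪u, N v⟫) (l d y₁ y₂ : Y) (q₁ q₂ : ℝ)
    (h₁ : q y₁ = q₁) (h₂ : q y₂ = q₂)
    (hstep : ∀ yy : Y,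
      q y₁ + (((1 / 2) * ⟪y₁, N y₁⟫ - ⟪l, y₁⟫ : ℝ) : EReal) + ((⟪d, yy - y₁⟫ : ℝ) : EReal)
        ≤ q yy + (((1 / 2) * ⟪yy, N yy⟫ - ⟪l, yy⟫ : ℝ) : EReal)) :
    q₁ + ⟪d, y₂ - y₁⟫ ≤ q₂ + ⟪N y₁ - l, y₂ - y₁⟫ := by
  have key : ∀ t : ℝ, 0 < t → t ≤ 1 →
      q₁ + ⟪d, y₂ - y₁⟫ ≤ q₂ + ⟪N y₁ - l, y₂ - y₁⟫ + t * ((1 / 2) * ⟪y₂ - y₁, N (y₂ - y₁)⟫) := by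
    intro t ht ht1
    have hs := hstep (t • y₂ + (1 - t) • y₁)
    have hc := hq_conv y₂ y₁ t ht.le ht1
    rw [h₁, h₂] at hc
    rw [h₁] at hs
    have hsc := hs.trans (add_le_add_left hc _)
    have hreal : q₁ + ((1 / 2) * ⟪y₁, N y₁⟫ - ⟪l, y₁⟫) + ⟪d, (t • y₂ + (1 - t) • y₁) - y₁⟫
        ≤ (t * q₂ + (1 - t) * q₁) + ((1 / 2) * ⟪t • y₂ + (1 - t) • y₁,
          N (t • y₂ + (1 - t) • y₁)⟫ - ⟪l, t • y₂ + (1 - t) • y₁⟫) := by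
      exact_mod_cast hsc
    have hpt : t • y₂ + (1 - t) • y₁ = y₁ + t • (y₂ - y₁) := by module
    have hsym : ⟪y₂ - y₁, N y₁⟫ = ⟪N y₁, y₂ - y₁⟫ := real_inner_comm _ _
    rw [hpt] at hreal
    simp only [add_sub_cancel_left, map_add, map_smul, inner_add_left, inner_add_right,
      real_inner_smul_left, real_inner_smul_right, hsym, ← hN y₁ (y₂ - y₁)] at hreal
    rw [inner_sub_left (N y₁)]
    refine le_of_mul_le_mul_left ?_ ht
    linarith
  have hlim : Filter.Tendsto
      (fun t : ℝ => q₂ + ⟪N y₁ - l, y₂ - y₁⟫ + t * ((1 / 2) * ⟪y₂ - y₁, N (y₂ - y₁)⟫))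
      (nhdsWithin 0 (Set.Ioi 0)) (nhds (q₂ + ⟪N y₁ - l, y₂ - y₁⟫)) := by
    have : Continuous
        (fun t : ℝ => q₂ + ⟪N y₁ - l, y₂ - y₁⟫ + t * ((1 / 2) * ⟪y₂ - y₁, N (y₂ - y₁)⟫)) := by
      fun_prop
    simpa using (this.tendsto 0).mono_left nhdsWithin_le_nhds
  refine ge_of_tendsto hlim ?_
  filter_upwards [Ioc_mem_nhdsGT (zero_lt_one' ℝ)] with t ht
  exact key t ht.1 ht.2

/-- If `g` is convex with gradient field `G` and is majorised by its linearisations plus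
`½⟪·, S ·⟫`, then `⟪G y' - G y, v⟫` cannot be much below zero when `v` is close to `y' - y`. -/
lemma gradient_diff_lower_bound {Y : Type*} [NormedAddCommGroup Y] [InnerProductSpace ℝ Y]
    (g : Y → ℝ) (G : Y → Y) (S : Y →L[ℝ] Y)
    (hlb : ∀ y y' : Y, g y' + ⟪G y', y - y'⟫ ≤ g y)
    (hub : ∀ y y' : Y, g y ≤ g y' + ⟪G y', y - y'⟫ + (1 / 2) * ⟪y - y', S (y - y')⟫)
    (y y' v : Y) :
    -((1 / 4) * ⟪(y' - y) - v, S ((y' - y) - v)⟫) ≤ ⟪G y' - G y, v⟫ := by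
  -- Comparing lower and upper models at two points whose difference is `v`, each at the same
  -- distance from one of the base points.
  obtain ⟨e, he⟩ : ∃ e, e = (y' - y) - v := ⟨_, rfl⟩
  have hv : v = (y' - y) - e := by rw [he]; abel
  have a1 := (hlb (y' - (1 / 2 : ℝ) • e) y).trans (hub (y' - (1 / 2 : ℝ) • e) y')
  have b1 := (hlb (y + (1 / 2 : ℝ) • e) y').trans (hub (y + (1 / 2 : ℝ) • e) y)
  rw [← he]
  have e1 : y' - (1 / 2 : ℝ) • e - y' = -((1 / 2 : ℝ) • e) := by abel
  have e2 : y + (1 / 2 : ℝ) • e - y = (1 / 2 : ℝ) • e := by abel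
  rw [e1] at a1
  rw [e2] at b1
  subst hv
  simp only [map_neg, map_smul, inner_neg_left, inner_neg_right, inner_add_right, inner_sub_right,
    inner_sub_left, real_inner_smul_left, real_inner_smul_right] at a1 b1 ⊢
  linarith

/-- The quadratic inequality in the residuals `r = r^k`, `r' = r^{k+1}` and `u = B Δy^k`. -/
lemma residual_inequality {Z : Type*} [NormedAddCommGroup Z] [InnerProductSpace ℝ Z]
    (r r' u : Z) (τ α αh β ρ : ℝ)
    (hτ0 : 0 < τ) (hτ1 : τ < (1 + Real.sqrt 5) / 2)
    (hα : α = (1 / 2) * (1 + τ / min (1 + τ) (1 + 1 / τ)))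
    (hαh : αh = 1 - α * min τ (1 / τ))
    (hβ : β = min 1 (1 - τ + 1 / τ) * α - (1 - α) * τ)
    (hρ : ρ = min τ (1 + τ - τ ^ 2)) :
    0 ≤ α ∧ αh * (‖r'‖ ^ 2 - ‖r‖ ^ 2) + β * ‖r'‖ ^ 2 + ((1 - α) / 2) * ‖r - r' - u‖ ^ 2
        + ρ * α * ‖u‖ ^ 2
      ≤ (1 - τ) * ‖r'‖ ^ 2 + ‖r' + u‖ ^ 2 - 2 * α * ⟪r' - (1 - τ) • r, u⟫ := by
  -- The golden ratio is the positive root of `τ² = τ + 1`.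
  have hgold : τ ^ 2 < 1 + τ := by
    have h5 : Real.sqrt 5 ^ 2 = 5 := Real.sq_sqrt (by norm_num)
    have h5' : 1 ≤ Real.sqrt 5 := Real.one_le_sqrt.2 (by norm_num)
    have h := mul_pos (sub_pos.2 hτ1)
      (by linarith : 0 < τ + ((1 + Real.sqrt 5) / 2 - 1))
    linarith
  have hmin : 0 < min (1 + τ) (1 + 1 / τ) := by positivity
  have hα0 : 0 ≤ α := by rw [hα]; positivity
  have hα1 : α ≤ 1 := by
    have hle : τ ≤ min (1 + τ) (1 + 1 / τ) := by
      refine le_min (by linarith) ?_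
      have : 1 + 1 / τ = (1 + τ) / τ := by field_simp; ring
      rw [this, le_div_iff₀ hτ0]
      nlinarith
    have := (div_le_one hmin).2 hle
    rw [hα]; linarith
  refine ⟨hα0, ?_⟩
  have hpar : ‖r - r' - u‖ ^ 2 ≤ 2 * ‖r' + u‖ ^ 2 + 2 * ‖r‖ ^ 2 := by
    have h := parallelogram_law_with_norm ℝ r (r' + u)
    have e : r - r' - u = r - (r' + u) := by abel
    rw [e]
    nlinarith [sq_nonneg ‖r + (r' + u)‖]
  have hpar' := mul_le_mul_of_nonneg_left hpar (by linarith : 0 ≤ (1 - α) / 2)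
  have hru : ‖r' + u‖ ^ 2 = ‖r'‖ ^ 2 + 2 * ⟪r', u⟫ + ‖u‖ ^ 2 := norm_add_sq_real _ _
  rw [inner_sub_left, real_inner_smul_left]
  rcases le_or_gt τ 1 with h | h
  · have hinv : 1 ≤ 1 / τ := by rw [le_div_iff₀ hτ0]; linarith
    rw [min_eq_left (by linarith)] at hαh hβ
    rw [min_eq_left (by nlinarith)] at hρ
    have hsq := mul_nonneg (mul_nonneg hα0 (by linarith : 0 ≤ 1 - τ)) (sq_nonneg ‖r + u‖)
    rw [norm_add_sq_real] at hsq
    subst hαh hβ hρ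
    rw [hru] at hpar' ⊢
    linarith
  · have hinv : 1 / τ ≤ 1 := by rw [div_le_one hτ0]; linarith
    rw [min_eq_right (by linarith)] at hαh hβ
    rw [min_eq_right (by nlinarith)] at hρ
    have hsq := mul_nonneg (mul_nonneg hα0 (by linarith : 0 ≤ τ - 1))
      (mul_nonneg (by positivity : 0 ≤ 1 / τ) (sq_nonneg ‖r - τ • u‖))
    have hexp : (1 / τ) * ‖r - τ • u‖ ^ 2
        = (1 / τ) * ‖r‖ ^ 2 - 2 * ⟪r, u⟫ + τ * ‖u‖ ^ 2 := by
      rw [norm_sub_sq_real, real_inner_smul_right, norm_smul, mul_pow, Real.norm_eq_abs, sq_abs]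
      field_simp
    have hone : τ * (1 / τ) = 1 := by field_simp
    rw [hexp] at hsq
    generalize 1 / τ = i at *
    subst hαh hβ hρ
    rw [hru] at hpar' ⊢
    linear_combination hpar' + hsq + α * ‖r‖ ^ 2 * hone

/-- Lemma 2 of the paper: the key inequality relating consecutive residuals of the inexact
majorized semi-proximal ADMM (imsPADMM).  See the paper for the setup; here all the data of
the imsPADMM scheme are hypotheses. -/
theorem stmt_13
    {X Y Z : Type*}
    [NormedAddCommGroup X] [InnerProductSpace ℝ X] [FiniteDimensional ℝ X]
    [NormedAddCommGroup Y] [InnerProductSpace ℝ Y] [FiniteDimensional ℝ Y]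
    [NormedAddCommGroup Z] [InnerProductSpace ℝ Z] [FiniteDimensional ℝ Z]
    (p : X → EReal) (q : Y → EReal)
    (hp_lsc : LowerSemicontinuous p) (hq_lsc : LowerSemicontinuous q)
    (hp_conv : ∀ x x' : X, ∀ t : ℝ, 0 ≤ t → t ≤ 1 →
      p (t • x + (1 - t) • x') ≤ (t : EReal) * p x + ((1 - t : ℝ) : EReal) * p x')
    (hq_conv : ∀ y y' : Y, ∀ t : ℝ, 0 ≤ t → t ≤ 1 →
      q (t • y + (1 - t) • y') ≤ (t : EReal) * q y + ((1 - t : ℝ) : EReal) * q y')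
    (f : X → ℝ) (g : Y → ℝ) (hf : Differentiable ℝ f) (hg : Differentiable ℝ g)
    (Sf Sfh : X →L[ℝ] X) (Sg Sgh : Y →L[ℝ] Y)
    (hSf_sa : ∀ u v : X, ⟪Sf u, v⟫ = ⟪u, Sf v⟫) (hSf_psd : ∀ u : X, 0 ≤ ⟪u, Sf u⟫)
    (hSfh_sa : ∀ u v : X, ⟪Sfh u, v⟫ = ⟪u, Sfh v⟫) (hSfh_psd : ∀ u : X, 0 ≤ ⟪u, Sfh u⟫)
    (hSg_sa : ∀ u v : Y, ⟪Sg u, v⟫ = ⟪u, Sg v⟫) (hSg_psd : ∀ u : Y, 0 ≤ ⟪u, Sg u⟫)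
    (hSgh_sa : ∀ u v : Y, ⟪Sgh u, v⟫ = ⟪u, Sgh v⟫) (hSgh_psd : ∀ u : Y, 0 ≤ ⟪u, Sgh u⟫)
    (hf_lb : ∀ x x' : X,
      f x' + ⟪gradient f x', x - x'⟫ + (1 / 2) * ⟪x - x', Sf (x - x')⟫ ≤ f x)
    (hf_ub : ∀ x x' : X,
      f x ≤ f x' + ⟪gradient f x', x - x'⟫ + (1 / 2) * ⟪x - x', Sfh (x - x')⟫)
    (hg_lb : ∀ y y' : Y,
      g y' + ⟪gradient g y', y - y'⟫ + (1 / 2) * ⟪y - y', Sg (y - y')⟫ ≤ g y)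
    (hg_ub : ∀ y y' : Y,
      g y ≤ g y' + ⟪gradient g y', y - y'⟫ + (1 / 2) * ⟪y - y', Sgh (y - y')⟫)
    (A : X →L[ℝ] Z) (B : Y →L[ℝ] Z) (c : Z) (σ τ : ℝ)
    (hσ : 0 < σ) (hτ0 : 0 < τ) (hτ1 : τ < (1 + Real.sqrt 5) / 2)
    (S : X →L[ℝ] X) (T : Y →L[ℝ] Y)
    (hS_sa : ∀ u v : X, ⟪S u, v⟫ = ⟪u, S v⟫) (hS_psd : ∀ u : X, 0 ≤ ⟪u, S u⟫)
    (hT_sa : ∀ u v : Y, ⟪T u, v⟫ = ⟪u, T v⟫) (hT_psd : ∀ u : Y, 0 ≤ ⟪u, T u⟫)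
    (M Msqrt Minvsqrt : X →L[ℝ] X) (N Nsqrt Ninvsqrt : Y →L[ℝ] Y)
    (hMdef : M = Sfh + S + σ • (ContinuousLinearMap.adjoint A ∘L A))
    (hNdef : N = Sgh + T + σ • (ContinuousLinearMap.adjoint B ∘L B))
    (hM_pos : ∀ u : X, u ≠ 0 → 0 < ⟪u, M u⟫)
    (hN_pos : ∀ u : Y, u ≠ 0 → 0 < ⟪u, N u⟫)
    (hMsqrt_sa : ∀ u v : X, ⟪Msqrt u, v⟫ = ⟪u, Msqrt v⟫)
    (hMsqrt_psd : ∀ u : X, 0 ≤ ⟪u, Msqrt u⟫)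
    (hMsqrt_sq : Msqrt ∘L Msqrt = M)
    (hMinv1 : Minvsqrt ∘L Msqrt = ContinuousLinearMap.id ℝ X)
    (hMinv2 : Msqrt ∘L Minvsqrt = ContinuousLinearMap.id ℝ X)
    (hNsqrt_sa : ∀ u v : Y, ⟪Nsqrt u, v⟫ = ⟪u, Nsqrt v⟫)
    (hNsqrt_psd : ∀ u : Y, 0 ≤ ⟪u, Nsqrt u⟫)
    (hNsqrt_sq : Nsqrt ∘L Nsqrt = N)
    (hNinv1 : Ninvsqrt ∘L Nsqrt = ContinuousLinearMap.id ℝ Y)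
    (hNinv2 : Nsqrt ∘L Ninvsqrt = ContinuousLinearMap.id ℝ Y)
    (ε : ℕ → ℝ) (hε0 : ∀ k, 0 ≤ ε k) (hεsum : Summable ε)
    (x : ℕ → X) (y : ℕ → Y) (z : ℕ → Z) (dx : ℕ → X) (dy : ℕ → Y)
    (lx : ℕ → X) (ly : ℕ → Y)
    (hlx : ∀ k, lx k = M (x k) - gradient f (x k) - ContinuousLinearMap.adjoint A (z k)
      - σ • ContinuousLinearMap.adjoint A (A (x k) + B (y k) - c))
    (hly : ∀ k, ly k = N (y k) - gradient g (y k) - ContinuousLinearMap.adjoint B (z k)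
      - σ • ContinuousLinearMap.adjoint B (A (x (k + 1)) + B (y k) - c))
    (hp_fin : ∀ k, p (x (k + 1)) ≠ ⊤ ∧ p (x (k + 1)) ≠ ⊥)
    (hq_fin : ∀ k, q (y (k + 1)) ≠ ⊤ ∧ q (y (k + 1)) ≠ ⊥)
    (hdx : ∀ k, ‖Minvsqrt (dx k)‖ ≤ ε k)
    (hdy : ∀ k, ‖Ninvsqrt (dy k)‖ ≤ ε k)
    (hxstep : ∀ k, ∀ xx : X,
      p (x (k + 1))
          + (((1 / 2) * ⟪x (k + 1), M (x (k + 1))⟫ - ⟪lx k, x (k + 1)⟫ : ℝ) : EReal)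
          + ((⟪dx k, xx - x (k + 1)⟫ : ℝ) : EReal)
        ≤ p xx + (((1 / 2) * ⟪xx, M xx⟫ - ⟪lx k, xx⟫ : ℝ) : EReal))
    (hystep : ∀ k, ∀ yy : Y,
      q (y (k + 1))
          + (((1 / 2) * ⟪y (k + 1), N (y (k + 1))⟫ - ⟪ly k, y (k + 1)⟫ : ℝ) : EReal)
          + ((⟪dy k, yy - y (k + 1)⟫ : ℝ) : EReal)
        ≤ q yy + (((1 / 2) * ⟪yy, N yy⟫ - ⟪ly k, yy⟫ : ℝ) : EReal))
    (hzstep : ∀ k, z (k + 1) = z k + (τ * σ) • (A (x (k + 1)) + B (y (k + 1)) - c))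
    (α αh β ρ : ℝ)
    (hα : α = (1 / 2) * (1 + τ / min (1 + τ) (1 + 1 / τ)))
    (hαh : αh = 1 - α * min τ (1 / τ))
    (hβ : β = min 1 (1 - τ + 1 / τ) * α - (1 - α) * τ)
    (hρ : ρ = min τ (1 + τ - τ ^ 2))
    :
    ∀ k : ℕ, 1 ≤ k →
      αh * σ * (‖A (x (k + 1)) + B (y (k + 1)) - c‖ ^ 2 - ‖A (x k) + B (y k) - c‖ ^ 2)
          + β * σ * ‖A (x (k + 1)) + B (y (k + 1)) - c‖ ^ 2
          + ((1 - α) * σ / 2) * ‖A (x k - x (k + 1))‖ ^ 2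
          - α * ⟪y (k - 1) - y k, (Sgh + T) (y (k - 1) - y k)⟫
          + α * ⟪y k - y (k + 1), (Sgh + T) (y k - y (k + 1))⟫
          + ρ * α * σ * ‖B (y k - y (k + 1))‖ ^ 2
        ≤ (1 - τ) * σ * ‖A (x (k + 1)) + B (y (k + 1)) - c‖ ^ 2
          + σ * ‖A (x (k + 1)) + B (y k) - c‖ ^ 2
          + 2 * α * ⟪dy (k - 1) - dy k, y k - y (k + 1)⟫ := by
  intro k hk
  obtain ⟨n, rfl⟩ : ∃ n, k = n + 1 := ⟨k - 1, by omega⟩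
  rw [Nat.add_sub_cancel]
  have hN_sa : ∀ u v : Y, ⟪N u, v⟫ = ⟪u, N v⟫ := by
    intro u v
    simp [hNdef, inner_add_left, inner_add_right, real_inner_smul_left, real_inner_smul_right,
      ContinuousLinearMap.adjoint_inner_left, ContinuousLinearMap.adjoint_inner_right,
      hSgh_sa u v, hT_sa u v]
  -- On the iterates with index at least one `q` takes real values.
  have hq_real : ∀ j, q (y (j + 1)) = ((q (y (j + 1))).toReal : EReal) := fun j =>
    (EReal.coe_toReal (hq_fin j).1 (hq_fin j).2).symm
  have hgrad : ∀ j, N (y (j + 1)) - ly j = gradient g (y j) - (Sgh + T) (y j - y (j + 1))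
      + ContinuousLinearMap.adjoint B
        (z j + σ • (A (x (j + 1)) + B (y (j + 1)) - c)) := by
    intro j
    rw [hly, hNdef]
    simp only [add_apply, smul_apply,
      ContinuousLinearMap.comp_apply, map_add, map_sub, map_smul]
    module
  have v1 := proxStep_variational q hq_conv N hN_sa (ly (n + 1)) (dy (n + 1)) (y (n + 1 + 1))
    (y (n + 1)) _ _ (hq_real (n + 1)) (hq_real n) (hystep (n + 1))
  have v0 := proxStep_variational q hq_conv N hN_sa (ly n) (dy n) (y (n + 1))
    (y (n + 1 + 1)) _ _ (hq_real n) (hq_real (n + 1)) (hystep n)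
  rw [hgrad] at v1 v0
  have hg_cvx : ∀ y y' : Y, g y' + ⟪gradient g y', y - y'⟫ ≤ g y := fun y y' => by
    linarith [hg_lb y y', hSg_psd (y - y')]
  have hG := gradient_diff_lower_bound g (gradient g) Sgh hg_cvx hg_ub (y (n + 1)) (y n)
    (y (n + 1) - y (n + 1 + 1))
  -- Naming the increments and residuals that enter the final estimate.
  obtain ⟨Δ, hΔ⟩ : ∃ Δ, Δ = y (n + 1) - y (n + 1 + 1) := ⟨_, rfl⟩
  obtain ⟨Δ', hΔ'⟩ : ∃ Δ', Δ' = y n - y (n + 1) := ⟨_, rfl⟩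
  obtain ⟨r', hr'⟩ : ∃ r', r' = A (x (n + 1 + 1)) + B (y (n + 1 + 1)) - c := ⟨_, rfl⟩
  obtain ⟨r, hr⟩ : ∃ r, r = A (x (n + 1)) + B (y (n + 1)) - c := ⟨_, rfl⟩
  have hflip : y (n + 1 + 1) - y (n + 1) = -Δ := by rw [hΔ]; abel
  have hz := hzstep n
  have hru : A (x (n + 1 + 1)) + B (y (n + 1)) - c = r' + B Δ := by
    rw [hr', hΔ, map_sub]; abel
  have hAx : A (x (n + 1) - x (n + 1 + 1)) = r - r' - B Δ := by
    rw [hr', hr, hΔ, map_sub, map_sub]; abel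
  rw [hflip] at v0
  rw [hru, hAx]
  rw [← hr] at v0 hz ⊢
  rw [← hr'] at v1 ⊢
  rw [← hΔ] at v1 hG ⊢
  rw [← hΔ'] at v0 hG ⊢
  rw [hz] at v1
  have hP : ∀ a b : Y, ⟪a, (Sgh + T) b⟫ = ⟪a, Sgh b⟫ + ⟪a, T b⟫ := fun a b => by
    simp [inner_add_right]
  -- The monotonicity inequality obtained from two consecutive steps.
  have hmono : (1 / 2) * ⟪Δ, (Sgh + T) Δ⟫ - (1 / 2) * ⟪Δ', (Sgh + T) Δ'⟫
      ≤ σ * ⟪r' - (1 - τ) • r, B Δ⟫ + ⟪dy n - dy (n + 1), Δ⟫ := by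
    have hTE := hT_psd (Δ' - Δ)
    have hSE := hSgh_psd (Δ' - Δ)
    have s1 : ⟪Sgh Δ', Δ⟫ = ⟪Δ, Sgh Δ'⟫ := real_inner_comm _ _
    have s2 : ⟪Δ', Sgh Δ⟫ = ⟪Δ, Sgh Δ'⟫ := by rw [← hSgh_sa, s1]
    have s3 : ⟪T Δ', Δ⟫ = ⟪Δ, T Δ'⟫ := real_inner_comm _ _
    have s4 : ⟪Δ', T Δ⟫ = ⟪Δ, T Δ'⟫ := by rw [← hT_sa, s3]
    have s5 : ⟪Sgh Δ, Δ⟫ = ⟪Δ, Sgh Δ⟫ := real_inner_comm _ _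
    have s6 : ⟪T Δ, Δ⟫ = ⟪Δ, T Δ⟫ := real_inner_comm _ _
    rw [hP, hP]
    simp only [inner_neg_right, inner_add_left, inner_sub_left, inner_sub_right,
      add_apply, map_sub, ContinuousLinearMap.adjoint_inner_left,
      real_inner_smul_left, s1, s2, s3, s4, s5, s6] at v0 v1 hG hTE hSE ⊢
    linarith
  obtain ⟨hα0, hres⟩ := residual_inequality r r' (B Δ) τ α αh β ρ hτ0 hτ1 hα hαh hβ hρ
  linear_combination σ * hres + 2 * α * hmono
end

section
/- Under the imsPADMM setup (see context), let (x̄, ȳ, z̄) be a KKT point. Define, for k ≥ 1, φ_k := (1/(τσ))‖z̄ − z^k‖² + ⟨x̄ − x^k, (Σ̂_f + S)(x̄ − x^k)⟩ + ⟨ȳ − y^k, (Σ̂_g + T)(ȳ − y^k)⟩ + σ‖A x̄ + B y^k − c‖² + α̂σ‖r^k‖² + α⟨Δy^{k−1}, (Σ̂_g + T)(Δy^{k−1})⟩, and the operators F := (1/2)Σ_f + S + ((1 − α)σ/2)·A*A and G := (1/2)Σ_g + T + ρ·α·σ·B*B. Then for every k ≥ 1: 2α⟨d_y^k − d_y^{k−1},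 Δy^k⟩ − 2⟨d_x^k, x^{k+1} − x̄⟩ − 2⟨d_y^k, y^{k+1} − ȳ⟩ + ⟨Δx^k, F(Δx^k)⟩ + ⟨Δy^k, G(Δy^k)⟩ + βσ‖r^{k+1}‖² ≤ φ_k − φ_{k+1}. -/
open scoped RealInnerProductSpace

/-!
The descent inequality is the sum of two estimates.

*Distance to the KKT point.* By convexity of `p` and `q`, an approximate minimiser of `p` (or `q`)
plus a quadratic yields a genuine subgradient of `p` (or `q`) at that point
(`subgradient_of_prox`). Monotonicity of the subdifferential between the new iterate and the KKT
point, together with the two-sided quadratic bounds on `f` and `g`, gives for each block a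
three-point inequality (`block_estimate`). Adding the two blocks and using the multiplier update
gives, with `r = A x^{k+1} + B y^{k+1} - c` and `b = B (y^k - y^{k+1})`, that, up to the error
terms in `dx` and `dy`, the decrease of the first four terms of `φ` dominates the
`S`, `T`, `Sf`, `Sg` terms plus `σ ((2 - τ) ‖r‖² + ‖b‖² + 2 ⟪b, r⟫)`.

*The cross term.* Monotonicity of the subdifferential of `q` between two consecutive iterates
bounds `2 σ ⟪b, r⟫` below by `2 (1 - τ) σ ⟪r^k, b⟫` plus a telescoping difference and an
error term. The gradient of `g` is handled by a cocoercivity-type estimate (`gradient_cross_bound`), which replaces the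
mean-value theorem for generalised Hessians.

A fraction `α ∈ [0, 1]` of the cross term is treated by the second estimate, and the remaining
fraction `1 - α` by completing the square and `‖A Δx‖² ≤ 2 ‖r^k‖² + 2 ‖r + b‖²`; what is left is
an inequality between vectors of `Z` (`residual_estimate`), where the cases `τ ≤ 1` and `τ > 1`
call for different weights in Young's inequality.
-/

section Helpers

variable {X Z : Type*}
  [NormedAddCommGroup X] [InnerProductSpace ℝ X]
  [NormedAddCommGroup Z] [InnerProductSpace ℝ Z]

/-! ### Subgradients from proximal steps -/

/-- A global lower bound with slope `d` on `p` plus a quadratic, tight at `x₁`, moves the gradient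
of the quadratic into the subgradient of the convex function `p`: compare along the segment from
`x₁` to `x₂` and let the step length tend to zero. -/
lemma subgradient_of_prox (p : X → EReal)
    (hp : ∀ x x' : X, ∀ t : ℝ, 0 ≤ t → t ≤ 1 →
      p (t • x + (1 - t) • x') ≤ (t : EReal) * p x + ((1 - t : ℝ) : EReal) * p x')
    (M : X →L[ℝ] X) (hM : ∀ u v : X, ⟪M u, v⟫ = ⟪u, M v⟫) (l d x₁ : X)
    (h : ∀ xx : X,
      p x₁ + (((1 / 2) * ⟪x₁, M x₁⟫ - ⟪l, x₁⟫ : ℝ) : EReal) + ((⟪d, xx - x₁⟫ : ℝ) : EReal)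
        ≤ p xx + (((1 / 2) * ⟪xx, M xx⟫ - ⟪l, xx⟫ : ℝ) : EReal))
    (h₁ : p x₁ ≠ ⊤ ∧ p x₁ ≠ ⊥) (x₂ : X) (h₂ : p x₂ ≠ ⊤ ∧ p x₂ ≠ ⊥) :
    (p x₁).toReal + ⟪d + l - M x₁, x₂ - x₁⟫ ≤ (p x₂).toReal := by
  have e₁ := EReal.coe_toReal h₁.1 h₁.2
  have e₂ := EReal.coe_toReal h₂.1 h₂.2
  set a := (p x₁).toReal
  set b := (p x₂).toReal
  set K := a + ⟪d + l - M x₁, x₂ - x₁⟫ - b with hK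
  set C := (1 / 2) * ⟪x₂ - x₁, M (x₂ - x₁)⟫ with hC
  have key : ∀ t : ℝ, 0 < t → t ≤ 1 → K ≤ t * C := by
    intro t ht0 ht1
    have hc := hp x₂ x₁ t ht0.le ht1
    have hs := (h (t • x₂ + (1 - t) • x₁)).trans (add_le_add_left hc _)
    rw [← e₁, ← e₂] at hs
    have hs' : a + ((1 / 2) * ⟪x₁, M x₁⟫ - ⟪l, x₁⟫) + ⟪d, t • x₂ + (1 - t) • x₁ - x₁⟫
        ≤ t * b + (1 - t) * a + ((1 / 2) * ⟪t • x₂ + (1 - t) • x₁, M (t • x₂ + (1 - t) • x₁)⟫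
          - ⟪l, t • x₂ + (1 - t) • x₁⟫) := by exact_mod_cast hs
    have ew : t • x₂ + (1 - t) • x₁ = x₁ + t • (x₂ - x₁) := by module
    rw [ew] at hs'
    have hsym : ⟪x₁, M (x₂ - x₁)⟫ = ⟪M x₁, x₂ - x₁⟫ := (hM _ _).symm
    have hsym' : ⟪x₂ - x₁, M x₁⟫ = ⟪M x₁, x₂ - x₁⟫ := real_inner_comm _ _
    have eK : K = a + (⟪d, x₂ - x₁⟫ + ⟪l, x₂ - x₁⟫ - ⟪M x₁, x₂ - x₁⟫) - b := by
      rw [hK, inner_sub_left, inner_add_left]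
    rw [add_sub_cancel_left] at hs'
    simp only [map_add, map_smul, inner_add_left, inner_add_right, real_inner_smul_left,
      real_inner_smul_right, hsym, hsym'] at hs'
    have : t * K ≤ t * (t * C) := by
      rw [eK, hC]; linarith
    exact le_of_mul_le_mul_left this ht0
  have hK0 : K ≤ 0 := by
    by_contra! hpos
    have h1 := key 1 one_pos le_rfl
    have hC0 : 0 < C := by linarith
    have h2 := key (K / (2 * C)) (by positivity)
      (by rw [div_le_one (by positivity)]; linarith)
    have h3 : K / (2 * C) * C = K / 2 := by field_simp
    linarith
  linarith

/-- The subgradient produced by a linearised step, with the proximal operator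
`M = Q + σ A* A` expanded; `w` is the constraint residual used in the step. -/
lemma step_subgradient [CompleteSpace X] [CompleteSpace Z] (A : X →L[ℝ] Z) (Q M : X →L[ℝ] X)
    (σ : ℝ) (hM : M = Q + σ • (ContinuousLinearMap.adjoint A ∘L A)) (x₀ x₁ d l gr : X) (z w : Z)
    (hl : l = M x₀ - gr - ContinuousLinearMap.adjoint A z
      - σ • ContinuousLinearMap.adjoint A w) :
    d + l - M x₁ = d + Q (x₀ - x₁) - gr
      - ContinuousLinearMap.adjoint A (z + σ • (w - A (x₀ - x₁))) := by
  subst hl hM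
  simp only [map_sub, map_add, map_smul, add_apply,
    smul_apply, ContinuousLinearMap.comp_apply]
  module

/-! ### Quadratic estimates for one block -/

/-- Three-point identity for a self-adjoint operator. -/
lemma three_point (Q : X →L[ℝ] X) (hQ : ∀ u v : X, ⟪Q u, v⟫ = ⟪u, Q v⟫) (a b c : X) :
    2 * ⟪Q (a - b), b - c⟫ =
      ⟪c - a, Q (c - a)⟫ - ⟪c - b, Q (c - b)⟫ - ⟪a - b, Q (a - b)⟫ := by
  have e : c - a = -((a - b) + (b - c)) := by abel
  have e' : c - b = -(b - c) := by abel
  rw [e, e']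
  generalize a - b = u
  generalize b - c = v
  simp only [map_neg, map_add, inner_neg_neg, inner_add_left, inner_add_right]
  rw [hQ u v, real_inner_comm (Q u) v, hQ u v]
  ring

/-- Young's inequality in the seminorm of a self-adjoint positive semidefinite operator. -/
lemma psd_young (Q : X →L[ℝ] X) (hQ : ∀ u v : X, ⟪Q u, v⟫ = ⟪u, Q v⟫)
    (hQ0 : ∀ u : X, 0 ≤ ⟪u, Q u⟫) (u v : X) :
    2 * ⟪Q u, v⟫ ≤ ⟪u, Q u⟫ + ⟪v, Q v⟫ := by
  have h := hQ0 (u - v)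
  simp only [map_sub, inner_sub_left, inner_sub_right] at h
  rw [real_inner_comm (Q u) v, hQ u v] at h
  rw [hQ u v]
  linarith

/-- Monotonicity of the subdifferential between the new iterate `x₁` and the KKT point `xb`,
combined with the two-sided quadratic bounds on the smooth part `f`, whose gradient is taken at
the old iterate `x₀`. Here `w` and `wb` are the multiplier parts of the two subgradients. -/
lemma block_estimate [CompleteSpace X] (f : X → ℝ) (Sf Sfh S : X →L[ℝ] X)
    (hSf_psd : ∀ u : X, 0 ≤ ⟪u, Sf u⟫)
    (hSfh_sa : ∀ u v : X, ⟪Sfh u, v⟫ = ⟪u, Sfh v⟫) (hS_sa : ∀ u v : X, ⟪S u, v⟫ = ⟪u, S v⟫)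
    (hf_lb : ∀ x x' : X,
      f x' + ⟪gradient f x', x - x'⟫ + (1 / 2) * ⟪x - x', Sf (x - x')⟫ ≤ f x)
    (hf_ub : ∀ x x' : X,
      f x ≤ f x' + ⟪gradient f x', x - x'⟫ + (1 / 2) * ⟪x - x', Sfh (x - x')⟫)
    (x₀ x₁ xb d w wb : X)
    (h : ⟪-gradient f xb - wb, x₁ - xb⟫
      ≤ ⟪d + (Sfh + S) (x₀ - x₁) - gradient f x₀ - w, x₁ - xb⟫) :
    (1 / 2) * ⟪x₀ - x₁, Sf (x₀ - x₁)⟫ + ⟪x₀ - x₁, S (x₀ - x₁)⟫ + 2 * ⟪w - wb, x₁ - xb⟫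
      ≤ 2 * ⟪d, x₁ - xb⟫ + ⟪xb - x₀, (Sfh + S) (xb - x₀)⟫
        - ⟪xb - x₁, (Sfh + S) (xb - x₁)⟫ := by
  have hQ : ∀ u v : X, ⟪(Sfh + S) u, v⟫ = ⟪u, (Sfh + S) v⟫ := fun u v => by
    simp only [add_apply, inner_add_left, inner_add_right, hSfh_sa, hS_sa]
  have h3 := three_point (Sfh + S) hQ x₀ x₁ xb
  have h1 := hf_lb xb x₀
  have h2 := hf_ub x₁ x₀
  have h4 := hf_lb x₁ xb
  -- parallelogram law: `‖u‖² + ‖v‖² ≥ ½ ‖u + v‖²` in the seminorm of `Sf`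
  have h5 : (1 / 2) * ⟪x₀ - x₁, Sf (x₀ - x₁)⟫
      ≤ ⟪xb - x₀, Sf (xb - x₀)⟫ + ⟪x₁ - xb, Sf (x₁ - xb)⟫ := by
    have := hSf_psd ((xb - x₀) - (x₁ - xb))
    have e : x₀ - x₁ = -((xb - x₀) + (x₁ - xb)) := by abel
    rw [e]
    generalize xb - x₀ = u at *
    generalize x₁ - xb = v at *
    simp only [map_neg, inner_neg_neg, map_add, map_sub, inner_add_left, inner_add_right,
      inner_sub_left, inner_sub_right] at this ⊢
    linarith
  have h6 : ⟪x₁ - x₀, Sfh (x₁ - x₀)⟫ = ⟪x₀ - x₁, Sfh (x₀ - x₁)⟫ := by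
    rw [← neg_sub x₀ x₁, map_neg, inner_neg_neg]
  have h7 : ⟪gradient f x₀, x₁ - x₀⟫ - ⟪gradient f x₀, xb - x₀⟫
      = ⟪gradient f x₀, x₁ - xb⟫ := by
    rw [← inner_sub_right]; congr 1; abel
  have h8 : ⟪x₀ - x₁, (Sfh + S) (x₀ - x₁)⟫
      = ⟪x₀ - x₁, Sfh (x₀ - x₁)⟫ + ⟪x₀ - x₁, S (x₀ - x₁)⟫ := by
    rw [add_apply, inner_add_right]
  rw [inner_sub_left, inner_sub_left, inner_sub_left, inner_add_left, inner_neg_left] at h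
  rw [inner_sub_left w]
  linarith

/-- A cocoercivity-type estimate for the convex function `½ ⟪·, Sgh ·⟫ - g`, whose curvature lies
between `0` and `Sgh`, stated for `g` itself. -/
lemma gradient_cross_bound [CompleteSpace X] (g : X → ℝ) (Sg Sgh : X →L[ℝ] X)
    (hSg_psd : ∀ u : X, 0 ≤ ⟪u, Sg u⟫) (hSgh_sa : ∀ u v : X, ⟪Sgh u, v⟫ = ⟪u, Sgh v⟫)
    (hg_lb : ∀ y y' : X,
      g y' + ⟪gradient g y', y - y'⟫ + (1 / 2) * ⟪y - y', Sg (y - y')⟫ ≤ g y)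
    (hg_ub : ∀ y y' : X,
      g y ≤ g y' + ⟪gradient g y', y - y'⟫ + (1 / 2) * ⟪y - y', Sgh (y - y')⟫)
    (u v b : X) :
    2 * ⟪Sgh (u - v), b⟫ + 2 * ⟪gradient g v - gradient g u, b⟫
      ≤ ⟪u - v, Sgh (u - v)⟫ + ⟪b, Sgh b⟫ := by
  have h1 := hg_lb (u - b) u
  have h2 := hg_ub (u - b) v
  have h3 := hg_lb u v
  have p1 := hSg_psd (u - b - u)
  have p3 := hSg_psd (u - v)
  have e1 : u - b - u = -b := by abel
  have e2 : u - b - v = (u - v) - b := by abel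
  rw [e1, inner_neg_right] at h1
  rw [e2] at h2
  rw [e1] at p1
  generalize u - v = a at *
  simp only [map_sub, inner_sub_left, inner_sub_right] at h2 ⊢
  rw [real_inner_comm (Sgh a) b, hSgh_sa a b] at h2
  rw [hSgh_sa a b]
  linarith

/-! ### Residuals in the constraint space -/

/-- The inequality between residuals: `a = A Δx`, `b = B Δy`, `s` and `r` are the old and the new
residual. -/
lemma residual_estimate (σ τ α αh β ρ : ℝ)
    (hσ : 0 < σ) (hτ0 : 0 < τ) (hτ1 : τ < (1 + Real.sqrt 5) / 2)
    (hα : α = (1 / 2) * (1 + τ / min (1 + τ) (1 + 1 / τ)))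
    (hαh : αh = 1 - α * min τ (1 / τ))
    (hβ : β = min 1 (1 - τ + 1 / τ) * α - (1 - α) * τ)
    (hρ : ρ = min τ (1 + τ - τ ^ 2))
    (a b r s : Z) (h : s - a = r + b) :
    0 ≤ α ∧
    (1 - α) * σ / 2 * ‖a‖ ^ 2 + ρ * α * σ * ‖b‖ ^ 2 + β * σ * ‖r‖ ^ 2
        + αh * σ * (‖r‖ ^ 2 - ‖s‖ ^ 2)
      ≤ (1 - α) * (σ * ((2 - τ) * ‖r‖ ^ 2 + ‖b‖ ^ 2 + 2 * ⟪b, r⟫))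
        + α * (σ * ((2 - τ) * ‖r‖ ^ 2 + ‖b‖ ^ 2 + 2 * (1 - τ) * ⟪s, b⟫)) := by
  have hgold : τ ^ 2 < 1 + τ := by
    have h5 : Real.sqrt 5 ^ 2 = 5 := Real.sq_sqrt (by norm_num)
    have : 1 ≤ Real.sqrt 5 := by rw [Real.one_le_sqrt]; norm_num
    nlinarith
  have hmin : 0 < min (1 + τ) (1 + 1 / τ) := by positivity
  have hα0 : 0 ≤ α := by rw [hα]; positivity
  have hα1 : α ≤ 1 := by
    have : τ / min (1 + τ) (1 + 1 / τ) ≤ 1 := by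
      rw [div_le_one hmin, le_min_iff]
      refine ⟨by linarith, ?_⟩
      rw [← sub_nonneg]
      have : 1 + 1 / τ - τ = (1 + τ - τ ^ 2) / τ := by field_simp; ring
      rw [this]
      exact div_nonneg (by linarith) hτ0.le
    linarith
  refine ⟨hα0, ?_⟩
  have hA : (1 / 2) * ‖a‖ ^ 2 ≤ ‖s‖ ^ 2 + (‖r‖ ^ 2 + 2 * ⟪b, r⟫ + ‖b‖ ^ 2) := by
    have e : a = s - (r + b) := by rw [← h]; abel
    have hp := parallelogram_law_with_norm ℝ s (r + b)
    have hn := norm_add_sq_real r b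
    rw [← e] at hp
    rw [real_inner_comm] at hn
    nlinarith [norm_nonneg (s + (r + b))]
  -- Young's inequality with weight `1` for `τ ≤ 1` and weight `τ` for `τ > 1`
  have hB : ρ * ‖b‖ ^ 2 + min 1 (1 - τ + 1 / τ) * ‖r‖ ^ 2
      + (1 - min τ (1 / τ)) * (‖r‖ ^ 2 - ‖s‖ ^ 2)
      ≤ (2 - τ) * ‖r‖ ^ 2 + ‖b‖ ^ 2 + 2 * (1 - τ) * ⟪s, b⟫ := by
    rcases le_or_gt τ 1 with hle | hgt
    · have hi : 1 ≤ 1 / τ := by rw [le_div_iff₀ hτ0]; linarith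
      rw [hρ, min_eq_left (by nlinarith), min_eq_left (by linarith), min_eq_left (by linarith)]
      have hn := norm_add_sq_real s b
      have := mul_nonneg (sub_nonneg.2 hle) (sq_nonneg ‖s + b‖)
      rw [hn] at this
      linarith
    · have hi : 1 / τ ≤ 1 := by rw [div_le_iff₀ hτ0]; linarith
      rw [hρ, min_eq_right (by nlinarith), min_eq_right (by linarith),
        min_eq_right (by linarith)]
      have hn := norm_sub_sq_real s (τ • b)
      rw [real_inner_smul_right, norm_smul, Real.norm_of_nonneg hτ0.le] at hn
      have := mul_nonneg (mul_nonneg (sub_nonneg.2 hgt.le) (one_div_pos.2 hτ0).le)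
        (sq_nonneg ‖s - τ • b‖)
      rw [hn] at this
      have e : (τ - 1) * (1 / τ) * (‖s‖ ^ 2 - 2 * (τ * ⟪s, b⟫) + (τ * ‖b‖) ^ 2)
          = (1 - 1 / τ) * ‖s‖ ^ 2 - 2 * (τ - 1) * ⟪s, b⟫ + (τ ^ 2 - τ) * ‖b‖ ^ 2 := by
        field_simp
      rw [e] at this
      linarith
  have hA' := mul_le_mul_of_nonneg_left hA (mul_nonneg (sub_nonneg.2 hα1) hσ.le)
  have hB' := mul_le_mul_of_nonneg_left hB (mul_nonneg hα0 hσ.le)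
  rw [hβ, hαh]
  linarith

end Helpers

/-! ### The descent inequality -/

/-- Proposition 4 of the paper: the key descent inequality of the imsPADMM with respect to a
KKT point `(xbar, ybar, zbar)` and the merit function `φ`.  See the paper for the setup;
here all the data of the imsPADMM scheme are hypotheses. -/
theorem stmt_14
    {X Y Z : Type*}
    [NormedAddCommGroup X] [InnerProductSpace ℝ X] [FiniteDimensional ℝ X]
    [NormedAddCommGroup Y] [InnerProductSpace ℝ Y] [FiniteDimensional ℝ Y]
    [NormedAddCommGroup Z] [InnerProductSpace ℝ Z] [FiniteDimensional ℝ Z]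
    (p : X → EReal) (q : Y → EReal)
    (hp_lsc : LowerSemicontinuous p) (hq_lsc : LowerSemicontinuous q)
    (hp_conv : ∀ x x' : X, ∀ t : ℝ, 0 ≤ t → t ≤ 1 →
      p (t • x + (1 - t) • x') ≤ (t : EReal) * p x + ((1 - t : ℝ) : EReal) * p x')
    (hq_conv : ∀ y y' : Y, ∀ t : ℝ, 0 ≤ t → t ≤ 1 →
      q (t • y + (1 - t) • y') ≤ (t : EReal) * q y + ((1 - t : ℝ) : EReal) * q y')
    (f : X → ℝ) (g : Y → ℝ) (hf : Differentiable ℝ f) (hg : Differentiable ℝ g)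
    (Sf Sfh : X →L[ℝ] X) (Sg Sgh : Y →L[ℝ] Y)
    (hSf_sa : ∀ u v : X, ⟪Sf u, v⟫ = ⟪u, Sf v⟫) (hSf_psd : ∀ u : X, 0 ≤ ⟪u, Sf u⟫)
    (hSfh_sa : ∀ u v : X, ⟪Sfh u, v⟫ = ⟪u, Sfh v⟫) (hSfh_psd : ∀ u : X, 0 ≤ ⟪u, Sfh u⟫)
    (hSg_sa : ∀ u v : Y, ⟪Sg u, v⟫ = ⟪u, Sg v⟫) (hSg_psd : ∀ u : Y, 0 ≤ ⟪u, Sg u⟫)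
    (hSgh_sa : ∀ u v : Y, ⟪Sgh u, v⟫ = ⟪u, Sgh v⟫) (hSgh_psd : ∀ u : Y, 0 ≤ ⟪u, Sgh u⟫)
    (hf_lb : ∀ x x' : X,
      f x' + ⟪gradient f x', x - x'⟫ + (1 / 2) * ⟪x - x', Sf (x - x')⟫ ≤ f x)
    (hf_ub : ∀ x x' : X,
      f x ≤ f x' + ⟪gradient f x', x - x'⟫ + (1 / 2) * ⟪x - x', Sfh (x - x')⟫)
    (hg_lb : ∀ y y' : Y,
      g y' + ⟪gradient g y', y - y'⟫ + (1 / 2) * ⟪y - y', Sg (y - y')⟫ ≤ g y)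
    (hg_ub : ∀ y y' : Y,
      g y ≤ g y' + ⟪gradient g y', y - y'⟫ + (1 / 2) * ⟪y - y', Sgh (y - y')⟫)
    (A : X →L[ℝ] Z) (B : Y →L[ℝ] Z) (c : Z) (σ τ : ℝ)
    (hσ : 0 < σ) (hτ0 : 0 < τ) (hτ1 : τ < (1 + Real.sqrt 5) / 2)
    (S : X →L[ℝ] X) (T : Y →L[ℝ] Y)
    (hS_sa : ∀ u v : X, ⟪S u, v⟫ = ⟪u, S v⟫) (hS_psd : ∀ u : X, 0 ≤ ⟪u, S u⟫)
    (hT_sa : ∀ u v : Y, ⟪T u, v⟫ = ⟪u, T v⟫) (hT_psd : ∀ u : Y, 0 ≤ ⟪u, T u⟫)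
    (M Msqrt Minvsqrt : X →L[ℝ] X) (N Nsqrt Ninvsqrt : Y →L[ℝ] Y)
    (hMdef : M = Sfh + S + σ • (ContinuousLinearMap.adjoint A ∘L A))
    (hNdef : N = Sgh + T + σ • (ContinuousLinearMap.adjoint B ∘L B))
    (hM_pos : ∀ u : X, u ≠ 0 → 0 < ⟪u, M u⟫)
    (hN_pos : ∀ u : Y, u ≠ 0 → 0 < ⟪u, N u⟫)
    (hMsqrt_sa : ∀ u v : X, ⟪Msqrt u, v⟫ = ⟪u, Msqrt v⟫)
    (hMsqrt_psd : ∀ u : X, 0 ≤ ⟪u, Msqrt u⟫)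
    (hMsqrt_sq : Msqrt ∘L Msqrt = M)
    (hMinv1 : Minvsqrt ∘L Msqrt = ContinuousLinearMap.id ℝ X)
    (hMinv2 : Msqrt ∘L Minvsqrt = ContinuousLinearMap.id ℝ X)
    (hNsqrt_sa : ∀ u v : Y, ⟪Nsqrt u, v⟫ = ⟪u, Nsqrt v⟫)
    (hNsqrt_psd : ∀ u : Y, 0 ≤ ⟪u, Nsqrt u⟫)
    (hNsqrt_sq : Nsqrt ∘L Nsqrt = N)
    (hNinv1 : Ninvsqrt ∘L Nsqrt = ContinuousLinearMap.id ℝ Y)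
    (hNinv2 : Nsqrt ∘L Ninvsqrt = ContinuousLinearMap.id ℝ Y)
    (ε : ℕ → ℝ) (hε0 : ∀ k, 0 ≤ ε k) (hεsum : Summable ε)
    (x : ℕ → X) (y : ℕ → Y) (z : ℕ → Z) (dx : ℕ → X) (dy : ℕ → Y)
    (lx : ℕ → X) (ly : ℕ → Y)
    (hlx : ∀ k, lx k = M (x k) - gradient f (x k) - ContinuousLinearMap.adjoint A (z k)
      - σ • ContinuousLinearMap.adjoint A (A (x k) + B (y k) - c))
    (hly : ∀ k, ly k = N (y k) - gradient g (y k) - ContinuousLinearMap.adjoint B (z k)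
      - σ • ContinuousLinearMap.adjoint B (A (x (k + 1)) + B (y k) - c))
    (hp_fin : ∀ k, p (x (k + 1)) ≠ ⊤ ∧ p (x (k + 1)) ≠ ⊥)
    (hq_fin : ∀ k, q (y (k + 1)) ≠ ⊤ ∧ q (y (k + 1)) ≠ ⊥)
    (hdx : ∀ k, ‖Minvsqrt (dx k)‖ ≤ ε k)
    (hdy : ∀ k, ‖Ninvsqrt (dy k)‖ ≤ ε k)
    (hxstep : ∀ k, ∀ xx : X,
      p (x (k + 1))
          + (((1 / 2) * ⟪x (k + 1), M (x (k + 1))⟫ - ⟪lx k, x (k + 1)⟫ : ℝ) : EReal)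
          + ((⟪dx k, xx - x (k + 1)⟫ : ℝ) : EReal)
        ≤ p xx + (((1 / 2) * ⟪xx, M xx⟫ - ⟪lx k, xx⟫ : ℝ) : EReal))
    (hystep : ∀ k, ∀ yy : Y,
      q (y (k + 1))
          + (((1 / 2) * ⟪y (k + 1), N (y (k + 1))⟫ - ⟪ly k, y (k + 1)⟫ : ℝ) : EReal)
          + ((⟪dy k, yy - y (k + 1)⟫ : ℝ) : EReal)
        ≤ q yy + (((1 / 2) * ⟪yy, N yy⟫ - ⟪ly k, yy⟫ : ℝ) : EReal))
    (hzstep : ∀ k, z (k + 1) = z k + (τ * σ) • (A (x (k + 1)) + B (y (k + 1)) - c))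
    (α αh β ρ : ℝ)
    (hα : α = (1 / 2) * (1 + τ / min (1 + τ) (1 + 1 / τ)))
    (hαh : αh = 1 - α * min τ (1 / τ))
    (hβ : β = min 1 (1 - τ + 1 / τ) * α - (1 - α) * τ)
    (hρ : ρ = min τ (1 + τ - τ ^ 2))
    (xbar : X) (ybar : Y) (zbar : Z)
    (hfeas : A xbar + B ybar = c)
    (hpbar_fin : p xbar ≠ ⊤ ∧ p xbar ≠ ⊥) (hqbar_fin : q ybar ≠ ⊤ ∧ q ybar ≠ ⊥)
    (hkkt_x : ∀ xx : X,
      p xbar + ((⟪-gradient f xbar - ContinuousLinearMap.adjoint A zbar, xx - xbar⟫ : ℝ)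
        : EReal) ≤ p xx)
    (hkkt_y : ∀ yy : Y,
      q ybar + ((⟪-gradient g ybar - ContinuousLinearMap.adjoint B zbar, yy - ybar⟫ : ℝ)
        : EReal) ≤ q yy)
    (φ : ℕ → ℝ)
    (hφ : ∀ k : ℕ, φ k =
      (1 / (τ * σ)) * ‖zbar - z k‖ ^ 2
        + ⟪xbar - x k, (Sfh + S) (xbar - x k)⟫
        + ⟪ybar - y k, (Sgh + T) (ybar - y k)⟫
        + σ * ‖A xbar + B (y k) - c‖ ^ 2
        + αh * σ * ‖A (x k) + B (y k) - c‖ ^ 2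
        + α * ⟪y (k - 1) - y k, (Sgh + T) (y (k - 1) - y k)⟫)
    (F : X →L[ℝ] X) (G : Y →L[ℝ] Y)
    (hFdef : F = (1 / 2 : ℝ) • Sf + S
      + ((1 - α) * σ / 2) • (ContinuousLinearMap.adjoint A ∘L A))
    (hGdef : G = (1 / 2 : ℝ) • Sg + T
      + (ρ * α * σ) • (ContinuousLinearMap.adjoint B ∘L B)) :
    ∀ k : ℕ, 1 ≤ k →
      2 * α * ⟪dy k - dy (k - 1), y k - y (k + 1)⟫
          - 2 * ⟪dx k, x (k + 1) - xbar⟫ - 2 * ⟪dy k, y (k + 1) - ybar⟫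
          + ⟪x k - x (k + 1), F (x k - x (k + 1))⟫
          + ⟪y k - y (k + 1), G (y k - y (k + 1))⟫
          + β * σ * ‖A (x (k + 1)) + B (y (k + 1)) - c‖ ^ 2
        ≤ φ k - φ (k + 1) := by
  intro k hk
  obtain ⟨j, rfl⟩ : ∃ j, k = j + 1 := ⟨k - 1, by omega⟩
  rw [hφ, hφ]
  simp only [Nat.add_sub_cancel]
  have hAdj : ∀ u v : X,
      ⟪(ContinuousLinearMap.adjoint A ∘L A) u, v⟫ = ⟪u, (ContinuousLinearMap.adjoint A ∘L A) v⟫ :=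
    fun u v => by
      simp [ContinuousLinearMap.adjoint_inner_left, ContinuousLinearMap.adjoint_inner_right]
  have hBdj : ∀ u v : Y,
      ⟪(ContinuousLinearMap.adjoint B ∘L B) u, v⟫ = ⟪u, (ContinuousLinearMap.adjoint B ∘L B) v⟫ :=
    fun u v => by
      simp [ContinuousLinearMap.adjoint_inner_left, ContinuousLinearMap.adjoint_inner_right]
  have hM_sa : ∀ u v : X, ⟪M u, v⟫ = ⟪u, M v⟫ := fun u v => by
    simp only [hMdef, add_apply, smul_apply,
      inner_add_left, inner_add_right, real_inner_smul_left, real_inner_smul_right, hSfh_sa, hS_sa,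
      hAdj]
  have hN_sa : ∀ u v : Y, ⟪N u, v⟫ = ⟪u, N v⟫ := fun u v => by
    simp only [hNdef, add_apply, smul_apply,
      inner_add_left, inner_add_right, real_inner_smul_left, real_inner_smul_right, hSgh_sa, hT_sa,
      hBdj]
  have subx := fun i => subgradient_of_prox p hp_conv M hM_sa _ _ _ (hxstep i) (hp_fin i)
  have suby := fun i => subgradient_of_prox q hq_conv N hN_sa _ _ _ (hystep i) (hq_fin i)
  have stepx := fun i => step_subgradient A (Sfh + S) M σ hMdef (x i) (x (i + 1)) (dx i) _ _ _ _
    (hlx i)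
  have stepy := fun i => step_subgradient B (Sgh + T) N σ hNdef (y i) (y (i + 1)) (dy i) _ _ _ _
    (hly i)
  have kx : (p xbar).toReal + ⟪-gradient f xbar - ContinuousLinearMap.adjoint A zbar,
      x (j + 1 + 1) - xbar⟫ ≤ (p (x (j + 1 + 1))).toReal := by
    have := hkkt_x (x (j + 1 + 1))
    rw [← EReal.coe_toReal hpbar_fin.1 hpbar_fin.2,
      ← EReal.coe_toReal (hp_fin (j + 1)).1 (hp_fin (j + 1)).2] at this
    exact_mod_cast this
  have ky : (q ybar).toReal + ⟪-gradient g ybar - ContinuousLinearMap.adjoint B zbar,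
      y (j + 1 + 1) - ybar⟫ ≤ (q (y (j + 1 + 1))).toReal := by
    have := hkkt_y (y (j + 1 + 1))
    rw [← EReal.coe_toReal hqbar_fin.1 hqbar_fin.2,
      ← EReal.coe_toReal (hq_fin (j + 1)).1 (hq_fin (j + 1)).2] at this
    exact_mod_cast this
  have sx := subx (j + 1) xbar hpbar_fin
  have sy := suby (j + 1) ybar hqbar_fin
  -- the subgradients of `q` at two consecutive iterates, each tested against the other iterate
  have s₁ := suby j (y (j + 1 + 1)) (hq_fin (j + 1))
  have s₂ := suby (j + 1) (y (j + 1)) (hq_fin j)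
  rw [stepx, ← neg_sub (x (j + 1 + 1)) xbar, inner_neg_right] at sx
  rw [stepy, ← neg_sub (y (j + 1 + 1)) ybar, inner_neg_right] at sy
  rw [stepy, ← neg_sub (y (j + 1)) (y (j + 1 + 1)), inner_neg_right] at s₁
  rw [stepy] at s₂
  have bx := block_estimate f Sf Sfh S hSf_psd hSfh_sa hS_sa hf_lb hf_ub (x (j + 1))
    (x (j + 1 + 1)) xbar (dx (j + 1)) _ (ContinuousLinearMap.adjoint A zbar)
    (by linarith : _ ≤ ⟪_ + _ - _ - _, _⟫)
  have bY := block_estimate g Sg Sgh T hSg_psd hSgh_sa hT_sa hg_lb hg_ub (y (j + 1))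
    (y (j + 1 + 1)) ybar (dy (j + 1)) _ (ContinuousLinearMap.adjoint B zbar)
    (by linarith : _ ≤ ⟪_ + _ - _ - _, _⟫)
  have gc := gradient_cross_bound g Sg Sgh hSg_psd hSgh_sa hg_lb hg_ub (y j) (y (j + 1))
    (y (j + 1) - y (j + 1 + 1))
  have ty := psd_young T hT_sa hT_psd (y j - y (j + 1)) (y (j + 1) - y (j + 1 + 1))
  have hz₁ := hzstep j
  have hz₂ := hzstep (j + 1)
  clear stepx stepy subx suby hxstep hystep hp_conv hq_conv hf_lb hf_ub hg_lb hg_ub kx ky sx sy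
    hkkt_x hkkt_y hzstep hlx hly
  -- names for the residuals and for the images of the increments
  obtain ⟨r, hr⟩ : ∃ r, r = A (x (j + 1 + 1)) + B (y (j + 1 + 1)) - c := ⟨_, rfl⟩
  obtain ⟨s, hs⟩ : ∃ s, s = A (x (j + 1)) + B (y (j + 1)) - c := ⟨_, rfl⟩
  obtain ⟨a, ha⟩ : ∃ a, a = A (x (j + 1) - x (j + 1 + 1)) := ⟨_, rfl⟩
  obtain ⟨b, hb⟩ : ∃ b, b = B (y (j + 1) - y (j + 1 + 1)) := ⟨_, rfl⟩
  obtain ⟨e, he⟩ : ∃ e, e = B (y (j + 1 + 1) - ybar) := ⟨_, rfl⟩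
  have hAe : A (x (j + 1 + 1) - xbar) = r - e := by
    rw [hr, he, ← hfeas]; simp only [map_sub]; abel
  have hab : s - a = r + b := by
    rw [hs, ha, hr, hb]; simp only [map_sub]; abel
  have hwx : A (x (j + 1)) + B (y (j + 1)) - c - A (x (j + 1) - x (j + 1 + 1)) = r + b := by
    rw [← hs, ← ha, hab]
  have hwy : A (x (j + 1 + 1)) + B (y (j + 1)) - c - B (y (j + 1) - y (j + 1 + 1)) = r := by
    rw [hr]; simp only [map_sub]; abel
  have hwy' : A (x (j + 1)) + B (y j) - c - B (y j - y (j + 1)) = s := by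
    rw [hs]; simp only [map_sub]; abel
  have hf₁ : A xbar + B (y (j + 1)) - c = e + b := by
    rw [he, hb, ← hfeas]; simp only [map_sub]; abel
  have hf₂ : A xbar + B (y (j + 1 + 1)) - c = e := by
    rw [he, ← hfeas]; simp only [map_sub]; abel
  rw [hwx, ← map_sub, ContinuousLinearMap.adjoint_inner_left, hAe] at bx
  rw [hwy, ← map_sub, ContinuousLinearMap.adjoint_inner_left, ← he] at bY
  rw [← hr] at hz₂
  rw [← hs] at hz₁
  rw [hwy, inner_sub_left, ContinuousLinearMap.adjoint_inner_left, ← hb, hz₁] at s₂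
  rw [hwy', inner_sub_left, ContinuousLinearMap.adjoint_inner_left, ← hb] at s₁
  rw [hf₁, hf₂, ← hs, ← hr, hFdef, hGdef]
  obtain ⟨hα0, res⟩ := residual_estimate σ τ α αh β ρ hσ hτ0 hτ1 hα hαh hβ hρ a b r s hab
  have hFe : ⟪x (j + 1) - x (j + 1 + 1), ((1 / 2 : ℝ) • Sf + S
      + ((1 - α) * σ / 2) • (ContinuousLinearMap.adjoint A ∘L A)) (x (j + 1) - x (j + 1 + 1))⟫
      = (1 / 2) * ⟪x (j + 1) - x (j + 1 + 1), Sf (x (j + 1) - x (j + 1 + 1))⟫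
        + ⟪x (j + 1) - x (j + 1 + 1), S (x (j + 1) - x (j + 1 + 1))⟫
        + (1 - α) * σ / 2 * ‖a‖ ^ 2 := by
    rw [add_apply, add_apply,
      smul_apply, smul_apply, inner_add_right,
      inner_add_right, real_inner_smul_right, real_inner_smul_right,
      ContinuousLinearMap.comp_apply, ContinuousLinearMap.adjoint_inner_right, ← ha,
      real_inner_self_eq_norm_sq]
  have hGe : ⟪y (j + 1) - y (j + 1 + 1), ((1 / 2 : ℝ) • Sg + T
      + (ρ * α * σ) • (ContinuousLinearMap.adjoint B ∘L B)) (y (j + 1) - y (j + 1 + 1))⟫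
      = (1 / 2) * ⟪y (j + 1) - y (j + 1 + 1), Sg (y (j + 1) - y (j + 1 + 1))⟫
        + ⟪y (j + 1) - y (j + 1 + 1), T (y (j + 1) - y (j + 1 + 1))⟫
        + ρ * α * σ * ‖b‖ ^ 2 := by
    rw [add_apply, add_apply,
      smul_apply, smul_apply, inner_add_right,
      inner_add_right, real_inner_smul_right, real_inner_smul_right,
      ContinuousLinearMap.comp_apply, ContinuousLinearMap.adjoint_inner_right, ← hb,
      real_inner_self_eq_norm_sq]
  -- the cross term, from monotonicity between consecutive iterates
  have cross : 2 * (1 - τ) * σ * ⟪s, b⟫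
      + ⟪y (j + 1) - y (j + 1 + 1), (Sgh + T) (y (j + 1) - y (j + 1 + 1))⟫
      - ⟪y j - y (j + 1), (Sgh + T) (y j - y (j + 1))⟫
      + 2 * ⟪dy (j + 1) - dy j, y (j + 1) - y (j + 1 + 1)⟫ ≤ 2 * σ * ⟪b, r⟫ := by
    simp only [inner_sub_left (dy (j + 1)), inner_sub_left (gradient g _)] at gc ⊢
    simp only [inner_sub_left (_ + _), inner_add_left, real_inner_smul_left,
      add_apply, inner_add_right] at s₁ s₂ ⊢
    rw [hSgh_sa (y (j + 1) - y (j + 1 + 1)), hT_sa (y (j + 1) - y (j + 1 + 1))] at s₂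
    rw [real_inner_comm r b]
    linarith
  -- the multiplier update turns the multiplier terms into a telescoping difference
  have mult : 2 * ⟪z (j + 1) + σ • (r + b) - zbar, r - e⟫ + 2 * ⟪z (j + 1) + σ • r - zbar, e⟫
      = (1 / (τ * σ)) * ‖zbar - z (j + 1 + 1)‖ ^ 2 - (1 / (τ * σ)) * ‖zbar - z (j + 1)‖ ^ 2
        + σ * ((2 - τ) * ‖r‖ ^ 2 + ‖b‖ ^ 2 + 2 * ⟪b, r⟫)
        - σ * ‖e + b‖ ^ 2 + σ * ‖e‖ ^ 2 := by
    have e₁ : zbar - z (j + 1 + 1) = -((z (j + 1) - zbar) + (τ * σ) • r) := by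
      rw [hz₂]; abel
    have e₂ : zbar - z (j + 1) = -(z (j + 1) - zbar) := by abel
    have e₃ : z (j + 1) + σ • (r + b) - zbar = (z (j + 1) - zbar) + σ • (r + b) := by abel
    have e₄ : z (j + 1) + σ • r - zbar = (z (j + 1) - zbar) + σ • r := by abel
    rw [e₁, e₂, e₃, e₄, norm_neg, norm_neg, norm_add_sq_real, norm_add_sq_real e b, norm_smul,
      Real.norm_of_nonneg (by positivity : 0 ≤ τ * σ), real_inner_comm b e]
    simp only [inner_add_left, inner_sub_right, real_inner_smul_left, real_inner_smul_right,
      real_inner_self_eq_norm_sq]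
    field_simp
    ring
  have cross' := mul_le_mul_of_nonneg_left cross hα0
  rw [hFe, hGe]
  linarith
end

section
/- Under the imsPADMM setup (see context), assume that at least one KKT point exists, and that the operators Σ_f + S + σA*A and Σ_g + T + σB*B are positive definite. Then the sequence (x^k, y^k, z^k)_{k≥0} converges to a limit (x^∞, y^∞, z^∞) ∈ X × Y × Z, and this limit is itself a KKT point. -/
open scoped RealInnerProductSpace

/-!
Global convergence of the inexact majorized semi-proximal ADMM.

Each inexact proximal step says that an explicit vector is a subgradient of `p` at `x (k+1)`, resp.
of `q` at `y (k+1)` (`subgrad_of_step`). Pairing these with the subgradients of a KKT point by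
monotonicity, and using the two-sided quadratic models of `f` and `g` (`grad_three_point`), gives an
energy inequality for the squared errors in which the only term without a sign is the product
`⟪r, B Δy⟫` of the new primal residual and the last `y`-increment (`energy_step`). Monotonicity of
`∂q` between two consecutive iterates, together with co-coercivity of the gradient of
`½⟨·, Σ̂_g ·⟩ - g`, replaces the new residual in this product by the old one with the factor `1 - τ`
(`cross_step`), and Young's inequality then absorbs it precisely because `1 + τ - τ² > 0`
(`young_weights`).

The result is a merit function `lyap` that decreases by `diss` up to errors bounded by
`δ k * (√ψ k + √ψ (k+1))` with `δ` summable (`lyap_step`). Such a sequence converges and its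
dissipation tends to zero (`perturbed_descent`). Hence the iterates are bounded, and increments and
residuals vanish, the increments because `Σ_f + S + σA*A` and `Σ_g + T + σB*B` are positive
definite. Any cluster point is a KKT point by closedness of the subdifferential
(`SubgradAt.of_tendsto`) and continuity of the gradients (`grad_continuous`). Centring the merit
function at a cluster point, its limit exists and is zero along a subsequence, so it is zero, and the
whole sequence converges.
-/

namespace ImsPADMM

variable {X Y Z : Type*}
  [NormedAddCommGroup X] [InnerProductSpace ℝ X]
  [NormedAddCommGroup Y] [InnerProductSpace ℝ Y]
  [NormedAddCommGroup Z] [InnerProductSpace ℝ Z]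

/-! ### Subgradients of extended-valued functions -/

/-- `v` is a subgradient of the extended-valued function `p` at `x`. Finiteness of `p x` is not part of
the definition and is assumed separately where it matters. -/
def SubgradAt (p : X → EReal) (x v : X) : Prop :=
  ∀ xx, p x + ((⟪v, xx - x⟫ : ℝ) : EReal) ≤ p xx

theorem SubgradAt.monotone {p : X → EReal} {x x' v v' : X} (h : SubgradAt p x v)
    (h' : SubgradAt p x' v') (ht : p x ≠ ⊤) (hb : p x ≠ ⊥) (ht' : p x' ≠ ⊤) (hb' : p x' ≠ ⊥) :
    0 ≤ ⟪v - v', x - x'⟫ := by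
  have h1 := h x'
  have h2 := h' x
  lift p x to ℝ using ⟨ht, hb⟩ with a
  lift p x' to ℝ using ⟨ht', hb'⟩ with b
  norm_cast at h1 h2
  simp only [inner_sub_left, inner_sub_right] at *
  linarith

/-- First-order optimality of an inexact proximal step, obtained by testing the step inequality
on a segment and letting the segment shrink. -/
theorem subgrad_of_step {p : X → EReal}
    (hconv : ∀ x x' : X, ∀ t : ℝ, 0 ≤ t → t ≤ 1 →
      p (t • x + (1 - t) • x') ≤ (t : EReal) * p x + ((1 - t : ℝ) : EReal) * p x')
    {M : X →L[ℝ] X} (hM : ∀ u v : X, ⟪M u, v⟫ = ⟪u, M v⟫) {x l d : X}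
    (ht : p x ≠ ⊤) (hb : p x ≠ ⊥)
    (h : ∀ xx : X,
      p x + (((1 / 2) * ⟪x, M x⟫ - ⟪l, x⟫ : ℝ) : EReal) + ((⟪d, xx - x⟫ : ℝ) : EReal)
        ≤ p xx + (((1 / 2) * ⟪xx, M xx⟫ - ⟪l, xx⟫ : ℝ) : EReal)) :
    SubgradAt p x (d + l - M x) := by
  intro xx
  have hxx := h xx
  by_cases hT : p xx = ⊤
  · simp [hT]
  have hB : p xx ≠ ⊥ := by
    intro hB
    lift p x to ℝ using ⟨ht, hb⟩ with a
    rw [hB, EReal.bot_add, le_bot_iff] at hxx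
    norm_cast at hxx
  have hseg : ∀ t : ℝ, 0 < t → t ≤ 1 →
      (p x).toReal + ⟪d + l - M x, xx - x⟫
        ≤ (p xx).toReal + t * ((1 / 2) * ⟪xx - x, M (xx - x)⟫) := by
    intro t ht0 ht1
    have h1 := h (t • xx + (1 - t) • x)
    have h2 := hconv xx x t ht0.le ht1
    have h3 := h1.trans (add_le_add_left h2 _)
    lift p x to ℝ using ⟨ht, hb⟩ with a
    lift p xx to ℝ using ⟨hT, hB⟩ with b
    norm_cast at h3
    have e : t • xx + (1 - t) • x = x + t • (xx - x) := by module
    rw [e] at h3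
    generalize xx - x = w at *
    have e2 := hM x w
    have e3 := real_inner_comm w (M x)
    simp only [map_add, map_smul, inner_add_left, inner_add_right, inner_sub_left,
      inner_smul_left, inner_smul_right, add_sub_cancel_left, RCLike.conj_to_real,
      EReal.toReal_coe] at *
    have h4 : ⟪w, M x⟫ = ⟪x, M w⟫ := by rw [← e2, real_inner_comm]
    rw [h4] at h3
    rw [e2]
    refine le_of_mul_le_mul_left ?_ ht0
    linarith
  have hlim : (p x).toReal + ⟪d + l - M x, xx - x⟫ ≤ (p xx).toReal := by
    have hc : Filter.Tendsto
        (fun t : ℝ => (p xx).toReal + t * ((1 / 2) * ⟪xx - x, M (xx - x)⟫))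
        (nhdsWithin 0 (Set.Ioi 0)) (nhds ((p xx).toReal + 0 * ((1 / 2) * ⟪xx - x, M (xx - x)⟫))) :=
      (Continuous.tendsto (by fun_prop) 0).mono_left nhdsWithin_le_nhds
    rw [zero_mul, add_zero] at hc
    refine ge_of_tendsto hc ?_
    filter_upwards [Ioc_mem_nhdsGT (zero_lt_one (α := ℝ))] with t h'
    exact hseg t h'.1 h'.2
  rw [← EReal.coe_toReal ht hb, ← EReal.coe_toReal hT hB]
  exact_mod_cast hlim

/-- Closedness of the graph of the subdifferential along a sequence, for an lsc function. -/
theorem SubgradAt.of_tendsto {p : X → EReal} (hp : LowerSemicontinuous p) {x v : ℕ → X} {xl vl : X}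
    (hx : Filter.Tendsto x Filter.atTop (nhds xl)) (hv : Filter.Tendsto v Filter.atTop (nhds vl))
    (h : ∀ k, SubgradAt p (x k) (v k)) (ht : ∀ k, p (x k) ≠ ⊤) (hb : ∀ k, p (x k) ≠ ⊥) :
    p xl ≠ ⊤ ∧ p xl ≠ ⊥ ∧ SubgradAt p xl vl := by
  have hbot : ∀ xx, p xx ≠ ⊥ := by
    intro xx hB
    have := h 0 xx
    have ht := ht 0
    have hb := hb 0
    lift p (x 0) to ℝ using ⟨ht, hb⟩ with a
    rw [hB, le_bot_iff] at this
    norm_cast at this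
  have key : ∀ xx, p xx ≠ ⊤ → p xl ≤ (((p xx).toReal - ⟪vl, xx - xl⟫ : ℝ) : EReal) := by
    intro xx hT
    by_contra! hlt
    obtain ⟨b, hb1, hb2⟩ := EReal.lt_iff_exists_real_btwn.1 hlt
    have hb1 : (p xx).toReal - ⟪vl, xx - xl⟫ < b := by exact_mod_cast hb1
    have hl : Filter.Tendsto (fun k => (p xx).toReal - ⟪v k, xx - x k⟫) Filter.atTop
        (nhds ((p xx).toReal - ⟪vl, xx - xl⟫)) :=
      tendsto_const_nhds.sub (hv.inner (tendsto_const_nhds.sub hx))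
    obtain ⟨k, hk1, hk2⟩ := ((hl.eventually (gt_mem_nhds hb1)).and
      (hx.eventually (hp xl b hb2))).exists
    have h1 := h k xx
    rw [← EReal.coe_toReal hT (hbot xx), ← EReal.coe_toReal (ht k) (hb k)] at h1
    rw [← EReal.coe_toReal (ht k) (hb k)] at hk2
    norm_cast at h1 hk2
    linarith
  have hxl : p xl ≠ ⊤ := fun hT => by
    have := key (x 0) (ht 0)
    rw [hT, top_le_iff] at this
    exact EReal.coe_ne_top _ this
  refine ⟨hxl, hbot xl, fun xx => ?_⟩
  by_cases hT : p xx = ⊤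
  · simp [hT]
  have := key xx hT
  rw [← EReal.coe_toReal hxl (hbot xl)] at this ⊢
  rw [← EReal.coe_toReal hT (hbot xx)]
  norm_cast at this ⊢
  linarith

/-! ### Functions with two-sided quadratic models -/

/-- Three-point inequality combining the upper model at `a` with the lower models at `a`, `c`. -/
theorem grad_three_point {f : X → ℝ} {gf : X → X} {P Q : X →L[ℝ] X}
    (hlb : ∀ x x' : X, f x' + ⟪gf x', x - x'⟫ + (1 / 2) * ⟪x - x', P (x - x')⟫ ≤ f x)
    (hub : ∀ x x' : X, f x ≤ f x' + ⟪gf x', x - x'⟫ + (1 / 2) * ⟪x - x', Q (x - x')⟫)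
    (a b c : X) :
    (1 / 2) * ⟪b - c, P (b - c)⟫ + (1 / 2) * ⟪a - c, P (a - c)⟫ - (1 / 2) * ⟪a - b, Q (a - b)⟫
      ≤ ⟪gf a - gf c, b - c⟫ := by
  have h1 := hub b a
  have h2 := hlb c a
  have h3 := hlb b c
  rw [← neg_sub a b, map_neg, inner_neg_neg] at h1
  rw [← neg_sub a c, map_neg, inner_neg_neg] at h2
  simp only [inner_sub_left, inner_sub_right, inner_neg_right, map_sub] at *
  linarith

/-- Co-coercivity of the gradient of `½⟨·, Q ·⟩ - f`, which is convex and majorized by `Q - P`. -/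
theorem grad_cocoercive {f : X → ℝ} {gf : X → X} {P Q : X →L[ℝ] X}
    (hQ : ∀ u v : X, ⟪Q u, v⟫ = ⟪u, Q v⟫)
    (hlb : ∀ x x' : X, f x' + ⟪gf x', x - x'⟫ + (1 / 2) * ⟪x - x', P (x - x')⟫ ≤ f x)
    (hub : ∀ x x' : X, f x ≤ f x' + ⟪gf x', x - x'⟫ + (1 / 2) * ⟪x - x', Q (x - x')⟫)
    (a b w : X) :
    ⟪Q (a - b) - (gf a - gf b), w⟫ ≤
      (1 / 2) * (⟪w, Q w⟫ - ⟪w, P w⟫) + (1 / 2) * (⟪a - b, Q (a - b)⟫ - ⟪a - b, P (a - b)⟫) := by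
  have h1 := hlb (a - w) a
  have h2 := hub (a - w) b
  have h3 := hlb a b
  have e : a - w - b = (a - b) - w := by abel
  have e' : a - w - a = -w := by abel
  rw [e] at h2
  rw [e'] at h1
  generalize a - b = s at *
  have e2 := hQ s w
  have e3 : ⟪w, Q s⟫ = ⟪s, Q w⟫ := by rw [← e2, real_inner_comm]
  simp only [inner_sub_left, inner_sub_right, inner_neg_right, inner_neg_left, map_sub,
    map_neg] at *
  linarith

/-- A convex function with a quadratic majorant has a continuous gradient. -/
theorem grad_continuous {f : X → ℝ} {gf : X → X} {P Q : X →L[ℝ] X}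
    (hP : ∀ u, 0 ≤ ⟪u, P u⟫)
    (hlb : ∀ x x' : X, f x' + ⟪gf x', x - x'⟫ + (1 / 2) * ⟪x - x', P (x - x')⟫ ≤ f x)
    (hub : ∀ x x' : X, f x ≤ f x' + ⟪gf x', x - x'⟫ + (1 / 2) * ⟪x - x', Q (x - x')⟫) :
    Continuous gf := by
  have hq : ∀ u, ⟪u, Q u⟫ ≤ ‖Q‖ * ‖u‖ ^ 2 := fun u => by
    have h1 := real_inner_le_norm u (Q u)
    have h2 := mul_le_mul_of_nonneg_left (Q.le_opNorm u) (norm_nonneg u)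
    nlinarith
  have key : ∀ a b, ‖gf a - gf b‖ ≤ (‖Q‖ + 1) * ‖a - b‖ := by
    intro a b
    -- Compare the upper model at `a` with the lower model at `b` in the point `a - K⁻¹ • D`; this
    -- step length keeps the quadratic term at most half of the linear gain `K⁻¹ * ‖D‖ ^ 2`.
    set K := ‖Q‖ + 1
    have hK : 0 < K := by positivity
    set D := gf a - gf b with hD
    have h1 := hub (a - K⁻¹ • D) a
    have h2 := hlb (a - K⁻¹ • D) b
    have h3 := hub a b
    have p2 := hP (a - K⁻¹ • D - b)
    have e : a - K⁻¹ • D - b = (a - b) - K⁻¹ • D := by abel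
    have e' : a - K⁻¹ • D - a = -(K⁻¹ • D) := by abel
    have q1 := hq (K⁻¹ • D)
    have q2 := hq (a - b)
    have e4 : ‖D‖ ^ 2 = ⟪gf a, D⟫ - ⟪gf b, D⟫ := by
      rw [← real_inner_self_eq_norm_sq, ← inner_sub_left]
    rw [norm_smul, Real.norm_of_nonneg (by positivity)] at q1
    rw [e] at h2 p2
    rw [e'] at h1
    have i1 : ⟪-(K⁻¹ • D), Q (-(K⁻¹ • D))⟫ = ⟪K⁻¹ • D, Q (K⁻¹ • D)⟫ := by
      rw [map_neg, inner_neg_neg]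
    rw [i1] at h1
    simp only [inner_neg_right, inner_sub_right, inner_smul_right] at h1 h2 h3
    have hs : K⁻¹ * ‖D‖ ^ 2 ≤ (1 / 2) * (‖Q‖ * (K⁻¹ * ‖D‖) ^ 2) + (1 / 2) * (‖Q‖ * ‖a - b‖ ^ 2) := by
      rw [e4]
      linarith
    have hs2 : ‖D‖ ^ 2 ≤ (K * ‖a - b‖) ^ 2 := by
      have hQK : ‖Q‖ ≤ K := by simp [K]
      have t1 : ‖Q‖ * (K⁻¹ * ‖D‖) ^ 2 ≤ K * (K⁻¹ * ‖D‖) ^ 2 := by gcongr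
      have t2 : ‖Q‖ * ‖a - b‖ ^ 2 ≤ K * ‖a - b‖ ^ 2 := by gcongr
      have t3 : K * (K⁻¹ * ‖D‖) ^ 2 = K⁻¹ * ‖D‖ ^ 2 := by field_simp
      have t4 : K⁻¹ * ‖D‖ ^ 2 ≤ K * ‖a - b‖ ^ 2 := by linarith
      have t5 := mul_le_mul_of_nonneg_left t4 hK.le
      rw [← mul_assoc, mul_inv_cancel₀ hK.ne', one_mul] at t5
      linarith
    exact abs_le_of_sq_le_sq' hs2 (by positivity) |>.2
  exact (LipschitzWith.of_dist_le_mul (K := ⟨‖Q‖ + 1, by positivity⟩) (fun a b => by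
    rw [dist_eq_norm, dist_eq_norm]; exact key a b)).continuous

/-! ### Auxiliary facts on operators and real sequences -/

/-- A positive definite operator on a finite-dimensional space is coercive. -/
theorem coercive [FiniteDimensional ℝ X] (P : X →L[ℝ] X) (hP : ∀ u, u ≠ 0 → 0 < ⟪u, P u⟫) :
    ∃ m > 0, ∀ u, m * ‖u‖ ^ 2 ≤ ⟪u, P u⟫ := by
  rcases subsingleton_or_nontrivial X with hX | hX
  · exact ⟨1, one_pos, fun u => by simp [Subsingleton.elim u 0]⟩
  have hne : (Metric.sphere (0 : X) 1).Nonempty := NormedSpace.sphere_nonempty.2 zero_le_one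
  obtain ⟨e, he, hmin⟩ := (isCompact_sphere (0 : X) 1).exists_isMinOn hne
    (f := fun u => ⟪u, P u⟫) (by fun_prop)
  have he1 : ‖e‖ = 1 := by simpa using he
  refine ⟨⟪e, P e⟫, hP e (by rintro rfl; simp at he1), fun u => ?_⟩
  by_cases hu : u = 0
  · simp [hu]
  have hn : 0 < ‖u‖ := norm_pos_iff.2 hu
  have := hmin (a := ‖u‖⁻¹ • u) (by simp [norm_smul, hn.ne'])
  simp only [Set.mem_ofPred_eq, map_smul, inner_smul_left, inner_smul_right,
    RCLike.conj_to_real] at this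
  calc _ ≤ (‖u‖⁻¹ * (‖u‖⁻¹ * ⟪u, P u⟫)) * ‖u‖ ^ 2 := by gcongr
    _ = _ := by field_simp

/-- Young's inequality with weights adapted to the relaxation parameter; the admissible range of
`τ` is exactly what leaves positive margins `a` and `b`. -/
theorem young_weights {τ : ℝ} (h0 : 0 < τ) (h1 : τ < (1 + Real.sqrt 5) / 2) :
    ∃ η a b : ℝ, 0 < η ∧ 0 < a ∧ 0 < b ∧ η + b = 2 - τ ∧
      ∀ r s : Z, -(2 * (1 - τ) * ⟪r, s⟫) ≤ (1 - a) * ‖s‖ ^ 2 + η * ‖r‖ ^ 2 := by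
  have h5 : Real.sqrt 5 ^ 2 = 5 := Real.sq_sqrt (by norm_num)
  have hpos : 0 < 1 + τ - τ ^ 2 := by
    have h2 : (1 : ℝ) < Real.sqrt 5 := Real.lt_sqrt_of_sq_lt (by norm_num)
    nlinarith [mul_pos (show 0 < Real.sqrt 5 - (2 * τ - 1) by linarith)
      (show 0 < Real.sqrt 5 + (2 * τ - 1) by linarith)]
  rcases le_or_gt τ 1 with hle | hgt
  · refine ⟨(1 - τ) + 1 / 2, τ, 1 / 2, by linarith, h0, by norm_num, by ring, fun r s => ?_⟩
    have h := norm_add_sq_real r s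
    have h2 := mul_nonneg (sub_nonneg.2 hle) (sq_nonneg ‖r + s‖)
    rw [h] at h2
    nlinarith [sq_nonneg ‖r‖]
  · refine ⟨(τ - 1) / τ, 1 + τ - τ ^ 2, (1 + τ - τ ^ 2) / τ, by have := sub_pos.2 hgt; positivity,
      hpos, by positivity, by field_simp; ring, fun r s => ?_⟩
    have h := norm_sub_sq_real r (τ • s)
    have h2 := mul_nonneg (div_pos (sub_pos.2 hgt) h0).le (sq_nonneg ‖r - τ • s‖)
    rw [h, norm_smul, Real.norm_of_nonneg h0.le, inner_smul_right] at h2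
    have e : (τ - 1) / τ * (‖r‖ ^ 2 - 2 * (τ * ⟪r, s⟫) + (τ * ‖s‖) ^ 2)
      = (τ - 1) / τ * ‖r‖ ^ 2 - 2 * (τ - 1) * ⟪r, s⟫ + (τ - 1) * τ * ‖s‖ ^ 2 := by
      field_simp
    linarith

/-- A perturbed monotone sequence: the cross terms `√ψ` are absorbed because
`ψ (k+1) - ψ k` factors through `√ψ (k+1) + √ψ k`. -/
theorem perturbed_descent {ψ D δ : ℕ → ℝ} (hψ : ∀ k, 0 ≤ ψ k) (hD : ∀ k, 0 ≤ D k)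
    (hδ : ∀ k, 0 ≤ δ k) (hsum : Summable δ)
    (h : ∀ k, ψ (k + 1) + D k ≤ ψ k + δ k * (√(ψ k) + √(ψ (k + 1)))) :
    (∃ l, Filter.Tendsto ψ Filter.atTop (nhds l)) ∧
      Filter.Tendsto D Filter.atTop (nhds 0) := by
  have hs : ∀ k, √(ψ (k + 1)) ≤ √(ψ k) + δ k := by
    intro k
    have h1 := h k
    have a1 := Real.sq_sqrt (hψ k)
    have a2 := Real.sq_sqrt (hψ (k + 1))
    have n1 := Real.sqrt_nonneg (ψ k)
    have n2 := Real.sqrt_nonneg (ψ (k + 1))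
    by_contra! hlt
    have := hD k
    have := hδ k
    nlinarith
  have hanti : Antitone (fun k => √(ψ k) - ∑ j ∈ Finset.range k, δ j) := by
    refine antitone_nat_of_succ_le fun k => ?_
    rw [Finset.sum_range_succ]
    linarith [hs k]
  have hbdd : BddBelow (Set.range (fun k => √(ψ k) - ∑ j ∈ Finset.range k, δ j)) := by
    refine ⟨-∑' j, δ j, ?_⟩
    rintro _ ⟨k, rfl⟩
    have := hsum.sum_le_tsum (Finset.range k) (fun i _ => hδ i)
    have := Real.sqrt_nonneg (ψ k)
    simp only
    linarith
  have hlim := (tendsto_atTop_ciInf hanti hbdd).add hsum.hasSum.tendsto_sum_nat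
  simp only [sub_add_cancel] at hlim
  set s := (⨅ i, √(ψ i) - ∑ j ∈ Finset.range i, δ j) + ∑' j, δ j
  have hψl : Filter.Tendsto ψ Filter.atTop (nhds (s ^ 2)) :=
    (hlim.pow 2).congr fun k => Real.sq_sqrt (hψ k)
  refine ⟨⟨_, hψl⟩, ?_⟩
  have hup := (hψl.sub (hψl.comp (Filter.tendsto_add_atTop_nat 1))).add
    (hsum.tendsto_atTop_zero.mul (hlim.add (hlim.comp (Filter.tendsto_add_atTop_nat 1))))
  simp only [sub_self, zero_mul, add_zero] at hup
  refine squeeze_zero hD (fun k => ?_) hup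
  have := h k
  simp only [Function.comp]
  linarith

theorem tendsto_zero_of_sq_le {E : Type*} [NormedAddCommGroup E] {v : ℕ → E} {D : ℕ → ℝ} {κ : ℝ}
    (hκ : 0 < κ) (h : ∀ k, κ * ‖v k‖ ^ 2 ≤ D k)
    (hD : Filter.Tendsto D Filter.atTop (nhds 0)) :
    Filter.Tendsto v Filter.atTop (nhds 0) := by
  have h1 := (hD.const_mul κ⁻¹).sqrt
  rw [mul_zero, Real.sqrt_zero] at h1
  refine squeeze_zero_norm (fun k => Real.le_sqrt_of_sq_le ?_) h1
  rw [← div_eq_inv_mul, le_div_iff₀ hκ]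
  linarith [h k]

theorem polarization_quad {P : X →L[ℝ] X} (hP : ∀ u v : X, ⟪P u, v⟫ = ⟪u, P v⟫) (u u' : X) :
    2 * ⟪P (u - u'), u'⟫ = ⟪u, P u⟫ - ⟪u', P u'⟫ - ⟪u - u', P (u - u')⟫ := by
  have h1 : ⟪u', P u⟫ = ⟪u, P u'⟫ := by rw [← hP, real_inner_comm]
  simp only [map_sub, inner_sub_left, inner_sub_right, hP]
  linarith

theorem quad_sub_le {Q : X →L[ℝ] X} (hQ : ∀ u, 0 ≤ ⟪u, Q u⟫) (s t : X) :
    ⟪s - t, Q (s - t)⟫ ≤ 2 * ⟪s, Q s⟫ + 2 * ⟪t, Q t⟫ := by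
  have := hQ (s + t)
  simp only [map_add, map_sub, inner_add_left, inner_add_right, inner_sub_left,
    inner_sub_right] at *
  linarith

variable [FiniteDimensional ℝ X] [FiniteDimensional ℝ Y] [FiniteDimensional ℝ Z]

/-! ### The merit function and its descent -/

/-- Quadratic merit function in the errors `u = x - x̄`, `v = y - ȳ`, `w = z - z̄` and the last
`y`-increment `e`. The primal residual appears as `A u + B v`; the last two terms compensate what the
cross-term estimate carries over from the preceding iteration. -/
noncomputable def lyap (P : X →L[ℝ] X) (R : Y →L[ℝ] Y) (A : X →L[ℝ] Z) (B : Y →L[ℝ] Z)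
    (σ τ η : ℝ) (u : X) (v : Y) (w : Z) (e : Y) : ℝ :=
  ⟪u, P u⟫ + ⟪v, R v⟫ + σ * ‖B v‖ ^ 2 + (τ * σ)⁻¹ * ‖w‖ ^ 2 + ⟪e, R e⟫
    + η * σ * ‖A u + B v‖ ^ 2

/-- The amount by which one iteration decreases the merit function, in terms of the increments
`s`, `t` of `x`, `y` and the new primal residual `r`. -/
noncomputable def diss (Sf S : X →L[ℝ] X) (Sg T : Y →L[ℝ] Y) (B : Y →L[ℝ] Z)
    (σ a b : ℝ) (s : X) (t : Y) (r : Z) : ℝ :=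
  ⟪s, S s⟫ + (1 / 2) * ⟪s, Sf s⟫ + ⟪t, T t⟫ + (1 / 2) * ⟪t, Sg t⟫
    + a * σ * ‖B t‖ ^ 2 + b * σ * ‖r‖ ^ 2

/-- Basic energy inequality obtained from monotonicity of the subdifferentials against a KKT point,
before the cross term in `⟪r, B Δy⟫` is controlled. -/
theorem energy_step {Sf Sfh S : X →L[ℝ] X} {Sg Sgh T : Y →L[ℝ] Y}
    {A : X →L[ℝ] Z} {B : Y →L[ℝ] Z} {σ τ : ℝ} (hσ : 0 < σ) (hτ : 0 < τ)
    (hSf : ∀ u : X, 0 ≤ ⟪u, Sf u⟫) (hSg : ∀ u : Y, 0 ≤ ⟪u, Sg u⟫)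
    (hP : ∀ u v : X, ⟪(Sfh + S) u, v⟫ = ⟪u, (Sfh + S) v⟫)
    (hR : ∀ u v : Y, ⟪(Sgh + T) u, v⟫ = ⟪u, (Sgh + T) v⟫)
    {u u' dx G : X} {v v' dy H : Y} {w w' : Z}
    (hw : w' = w + (τ * σ) • (A u' + B v'))
    (hx : 0 ≤ ⟪dx + (Sfh + S) (u - u') - G
      - ContinuousLinearMap.adjoint A (w + σ • (A u' + B v)), u'⟫)
    (hy : 0 ≤ ⟪dy + (Sgh + T) (v - v') - H
      - ContinuousLinearMap.adjoint B (w + σ • (A u' + B v')), v'⟫)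
    (hG : (1 / 2) * ⟪u', Sf u'⟫ + (1 / 2) * ⟪u, Sf u⟫ - (1 / 2) * ⟪u - u', Sfh (u - u')⟫
      ≤ ⟪G, u'⟫)
    (hH : (1 / 2) * ⟪v', Sg v'⟫ + (1 / 2) * ⟪v, Sg v⟫ - (1 / 2) * ⟪v - v', Sgh (v - v')⟫
      ≤ ⟪H, v'⟫) :
    ⟪u', (Sfh + S) u'⟫ + ⟪v', (Sgh + T) v'⟫ + σ * ‖B v'‖ ^ 2 + (τ * σ)⁻¹ * ‖w'‖ ^ 2
      + ⟪u - u', S (u - u')⟫ + (1 / 2) * ⟪u - u', Sf (u - u')⟫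
      + ⟪v - v', T (v - v')⟫ + (1 / 2) * ⟪v - v', Sg (v - v')⟫
      + σ * ‖B (v - v')‖ ^ 2 + 2 * σ * ⟪A u' + B v', B (v - v')⟫
      + (2 - τ) * σ * ‖A u' + B v'‖ ^ 2
    ≤ ⟪u, (Sfh + S) u⟫ + ⟪v, (Sgh + T) v⟫ + σ * ‖B v‖ ^ 2 + (τ * σ)⁻¹ * ‖w‖ ^ 2
      + 2 * ⟪dx, u'⟫ + 2 * ⟪dy, v'⟫ := by
  have pf := quad_sub_le hSf u u'
  have pg := quad_sub_le hSg v v'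
  have qx := polarization_quad hP u u'
  have qy := polarization_quad hR v v'
  have sx : ⟪u - u', (Sfh + S) (u - u')⟫ = ⟪u - u', Sfh (u - u')⟫ + ⟪u - u', S (u - u')⟫ := by
    rw [add_apply, inner_add_right]
  have sy : ⟪v - v', (Sgh + T) (v - v')⟫ = ⟪v - v', Sgh (v - v')⟫ + ⟪v - v', T (v - v')⟫ := by
    rw [add_apply, inner_add_right]
  have hw2 : (τ * σ)⁻¹ * ‖w'‖ ^ 2 = (τ * σ)⁻¹ * ‖w‖ ^ 2 + 2 * ⟪w, A u' + B v'⟫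
      + τ * σ * ‖A u' + B v'‖ ^ 2 := by
    rw [hw, norm_add_sq_real, norm_smul, inner_smul_right, Real.norm_of_nonneg (by positivity)]
    field_simp
  have hx' : 0 ≤ ⟪dx, u'⟫ + ⟪(Sfh + S) (u - u'), u'⟫ - ⟪G, u'⟫
      - ⟪w + σ • (A u' + B v), A u'⟫ := by
    rw [← ContinuousLinearMap.adjoint_inner_left, ← inner_add_left, ← inner_sub_left,
      ← inner_sub_left]
    exact hx
  have hy' : 0 ≤ ⟪dy, v'⟫ + ⟪(Sgh + T) (v - v'), v'⟫ - ⟪H, v'⟫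
      - ⟪w + σ • (A u' + B v'), B v'⟫ := by
    rw [← ContinuousLinearMap.adjoint_inner_left, ← inner_add_left, ← inner_sub_left,
      ← inner_sub_left]
    exact hy
  have hz : -2 * ⟪w + σ • (A u' + B v), A u'⟫ - 2 * ⟪w + σ • (A u' + B v'), B v'⟫
      = -2 * ⟪w, A u' + B v'⟫ - 2 * σ * ‖A u' + B v'‖ ^ 2
        - 2 * σ * ⟪A u' + B v', B (v - v')⟫
        + σ * (‖B v‖ ^ 2 - ‖B v'‖ ^ 2 - ‖B (v - v')‖ ^ 2) := by
    rw [map_sub]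
    generalize A u' = α
    generalize B v = β
    generalize B v' = γ
    have c1 := real_inner_comm α β
    have c2 := real_inner_comm α γ
    have c3 := real_inner_comm β γ
    simp only [← real_inner_self_eq_norm_sq, inner_add_left, inner_add_right, inner_sub_left,
      inner_sub_right, inner_smul_left, RCLike.conj_to_real]
    rw [c1, c2, c3]
    ring
  rw [hw2]
  linarith

/-- Bound on the cross term `⟪r, B Δy⟫` from monotonicity of `∂q` between consecutive iterates. -/
theorem cross_step {Sg Sgh T : Y →L[ℝ] Y}
    {B : Y →L[ℝ] Z} {σ τ : ℝ}
    (hSg : ∀ u : Y, 0 ≤ ⟪u, Sg u⟫)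
    (hTsa : ∀ u v : Y, ⟪T u, v⟫ = ⟪u, T v⟫) (hT : ∀ u : Y, 0 ≤ ⟪u, T u⟫)
    {e e' dy dy' g g' : Y} {w w' r r' : Z}
    (hw : w' = w + (τ * σ) • r)
    (hy : 0 ≤ ⟪(dy + (Sgh + T) e - g - ContinuousLinearMap.adjoint B (w + σ • r))
      - (dy' + (Sgh + T) e' - g' - ContinuousLinearMap.adjoint B (w' + σ • r')), e'⟫)
    (hco : ⟪Sgh e - (g - g'), e'⟫ ≤ (1 / 2) * (⟪e', Sgh e'⟫ - ⟪e', Sg e'⟫)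
      + (1 / 2) * (⟪e, Sgh e⟫ - ⟪e, Sg e⟫)) :
    2 * (1 - τ) * σ * ⟪r, B e'⟫ + ⟪e', (Sgh + T) e'⟫ - ⟪e, (Sgh + T) e⟫ + 2 * ⟪dy' - dy, e'⟫
      ≤ 2 * σ * ⟪r', B e'⟫ := by
  have h1 := hT (e - e')
  have h2 := hSg e
  have h3 := hSg e'
  have c1 := hTsa e e'
  have c2 : ⟪e', T e⟫ = ⟪e, T e'⟫ := by rw [← hTsa, real_inner_comm]
  have c3 := real_inner_comm e' (Sgh e')
  have c4 := real_inner_comm e' (T e')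
  subst hw
  simp only [map_sub, add_apply, inner_add_left, inner_add_right,
    inner_sub_left, inner_sub_right, inner_smul_left, RCLike.conj_to_real,
    ContinuousLinearMap.adjoint_inner_left] at *
  linarith

/-- Descent of the merit function over one iteration, up to the inexactness terms. -/
theorem lyap_step {Sf Sfh S : X →L[ℝ] X} {Sg Sgh T : Y →L[ℝ] Y}
    {A : X →L[ℝ] Z} {B : Y →L[ℝ] Z} {σ τ η a b : ℝ} (hσ : 0 < σ) (hτ : 0 < τ)
    (hηb : η + b = 2 - τ)
    (hyoung : ∀ r s : Z, -(2 * (1 - τ) * ⟪r, s⟫) ≤ (1 - a) * ‖s‖ ^ 2 + η * ‖r‖ ^ 2)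
    (hSf : ∀ u : X, 0 ≤ ⟪u, Sf u⟫) (hSg : ∀ u : Y, 0 ≤ ⟪u, Sg u⟫)
    (hP : ∀ u v : X, ⟪(Sfh + S) u, v⟫ = ⟪u, (Sfh + S) v⟫)
    (hR : ∀ u v : Y, ⟪(Sgh + T) u, v⟫ = ⟪u, (Sgh + T) v⟫)
    (hTsa : ∀ u v : Y, ⟪T u, v⟫ = ⟪u, T v⟫) (hT : ∀ u : Y, 0 ≤ ⟪u, T u⟫)
    {u u' dx G : X} {e v v' dy₀ dy H g g' : Y} {w₀ w w' : Z}
    (hw₀ : w = w₀ + (τ * σ) • (A u + B v))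
    (hw : w' = w + (τ * σ) • (A u' + B v'))
    (hx : 0 ≤ ⟪dx + (Sfh + S) (u - u') - G
      - ContinuousLinearMap.adjoint A (w + σ • (A u' + B v)), u'⟫)
    (hy : 0 ≤ ⟪dy + (Sgh + T) (v - v') - H
      - ContinuousLinearMap.adjoint B (w + σ • (A u' + B v')), v'⟫)
    (hyy : 0 ≤ ⟪(dy₀ + (Sgh + T) e - g - ContinuousLinearMap.adjoint B (w₀ + σ • (A u + B v)))
      - (dy + (Sgh + T) (v - v') - g'
        - ContinuousLinearMap.adjoint B (w + σ • (A u' + B v'))), v - v'⟫)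
    (hG : (1 / 2) * ⟪u', Sf u'⟫ + (1 / 2) * ⟪u, Sf u⟫ - (1 / 2) * ⟪u - u', Sfh (u - u')⟫
      ≤ ⟪G, u'⟫)
    (hH : (1 / 2) * ⟪v', Sg v'⟫ + (1 / 2) * ⟪v, Sg v⟫ - (1 / 2) * ⟪v - v', Sgh (v - v')⟫
      ≤ ⟪H, v'⟫)
    (hco : ⟪Sgh e - (g - g'), v - v'⟫
      ≤ (1 / 2) * (⟪v - v', Sgh (v - v')⟫ - ⟪v - v', Sg (v - v')⟫)
        + (1 / 2) * (⟪e, Sgh e⟫ - ⟪e, Sg e⟫)) :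
    lyap (Sfh + S) (Sgh + T) A B σ τ η u' v' w' (v - v')
        + diss Sf S Sg T B σ a b (u - u') (v - v') (A u' + B v')
      ≤ lyap (Sfh + S) (Sgh + T) A B σ τ η u v w e
        + (2 * ‖dx‖ * ‖u'‖ + 2 * ‖dy‖ * ‖v'‖ + 2 * (‖dy‖ + ‖dy₀‖) * (‖v‖ + ‖v'‖)) := by
  have h1 := energy_step hσ hτ hSf hSg hP hR hw hx hy hG hH
  have h2 := cross_step hSg hTsa hT hw₀ hyy hco
  have h3 := mul_le_mul_of_nonneg_left (hyoung (A u + B v) (B (v - v'))) hσ.le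
  have n1 := real_inner_le_norm dx u'
  have n2 := real_inner_le_norm dy v'
  have n3 : -⟪dy - dy₀, v - v'⟫ ≤ (‖dy‖ + ‖dy₀‖) * (‖v‖ + ‖v'‖) := by
    calc -⟪dy - dy₀, v - v'⟫ ≤ ‖dy - dy₀‖ * ‖v - v'‖ :=
          (neg_le_abs _).trans (abs_real_inner_le_norm _ _)
      _ ≤ _ := by gcongr <;> exact norm_sub_le _ _
  obtain rfl : b = 2 - τ - η := by linarith
  unfold lyap diss
  linarith

/-- The merit function controls all three errors. -/
theorem lyap_bound {P : X →L[ℝ] X} {R : Y →L[ℝ] Y} {A : X →L[ℝ] Z} {B : Y →L[ℝ] Z} {σ τ η : ℝ}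
    (hσ : 0 < σ) (hτ : 0 < τ) (hη : 0 < η)
    (hP : ∀ u, 0 ≤ ⟪u, P u⟫) (hR : ∀ u, 0 ≤ ⟪u, R u⟫)
    (hPA : ∀ u, u ≠ 0 → 0 < ⟪u, (P + σ • (ContinuousLinearMap.adjoint A ∘L A)) u⟫)
    (hRB : ∀ u, u ≠ 0 → 0 < ⟪u, (R + σ • (ContinuousLinearMap.adjoint B ∘L B)) u⟫) :
    (∀ u v w e, 0 ≤ lyap P R A B σ τ η u v w e) ∧
    ∃ C > 0, ∀ u v w e, ‖u‖ ≤ C * √(lyap P R A B σ τ η u v w e) ∧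
      ‖v‖ ≤ C * √(lyap P R A B σ τ η u v w e) ∧ ‖w‖ ≤ C * √(lyap P R A B σ τ η u v w e) := by
  have hnn : ∀ u v w e, 0 ≤ lyap P R A B σ τ η u v w e := fun u v w e => by
    have := hP u; have := hR v; have := hR e
    unfold lyap; positivity
  refine ⟨hnn, ?_⟩
  obtain ⟨m, hm, hm'⟩ := coercive _ hPA
  obtain ⟨n, hn, hn'⟩ := coercive _ hRB
  have eA : ∀ u, ⟪u, (P + σ • (ContinuousLinearMap.adjoint A ∘L A)) u⟫
      = ⟪u, P u⟫ + σ * ‖A u‖ ^ 2 := fun u => by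
    simp [inner_add_right, inner_smul_right, ContinuousLinearMap.adjoint_inner_right]
  have eB : ∀ u, ⟪u, (R + σ • (ContinuousLinearMap.adjoint B ∘L B)) u⟫
      = ⟪u, R u⟫ + σ * ‖B u‖ ^ 2 := fun u => by
    simp [inner_add_right, inner_smul_right, ContinuousLinearMap.adjoint_inner_right]
  set K := (1 + 2 / η + 2) / m + 1 / n + τ * σ with hK
  have hK0 : 0 < K := by positivity
  refine ⟨√K, Real.sqrt_pos.2 hK0, fun u v w e => ?_⟩
  set L := lyap P R A B σ τ η u v w e with hL
  have hL0 : 0 ≤ L := hnn u v w e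
  have p1 := hP u
  have p2 := hR v
  have p3 := hR e
  have p4 : 0 ≤ σ * ‖B v‖ ^ 2 := by positivity
  have p5 : 0 ≤ (τ * σ)⁻¹ * ‖w‖ ^ 2 := by positivity
  have p6 : 0 ≤ η * σ * ‖A u + B v‖ ^ 2 := by positivity
  have hLe : L = ⟪u, P u⟫ + ⟪v, R v⟫ + σ * ‖B v‖ ^ 2 + (τ * σ)⁻¹ * ‖w‖ ^ 2 + ⟪e, R e⟫
    + η * σ * ‖A u + B v‖ ^ 2 := rfl
  have hv : ‖v‖ ^ 2 ≤ 1 / n * L := by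
    have := hn' v
    rw [eB] at this
    rw [one_div, ← div_eq_inv_mul, le_div_iff₀ hn]
    linarith
  have hw : ‖w‖ ^ 2 ≤ τ * σ * L := by
    have : (τ * σ)⁻¹ * ‖w‖ ^ 2 ≤ L := by linarith
    rwa [inv_mul_le_iff₀ (by positivity)] at this
  have hu : ‖u‖ ^ 2 ≤ (1 + 2 / η + 2) / m * L := by
    have h1 := hm' u
    rw [eA] at h1
    -- `A u = (A u + B v) - B v`, and both summands are controlled.
    have h2 : ‖A u‖ ^ 2 ≤ 2 * ‖A u + B v‖ ^ 2 + 2 * ‖B v‖ ^ 2 := by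
      have e1 := norm_sub_le (A u + B v) (B v)
      rw [add_sub_cancel_right] at e1
      have := norm_nonneg (A u)
      nlinarith [sq_nonneg (‖A u + B v‖ - ‖B v‖)]
    have h3 : σ * ‖A u + B v‖ ^ 2 ≤ 1 / η * L := by
      rw [one_div, ← div_eq_inv_mul, le_div_iff₀ hη]
      linarith
    have h4 := mul_le_mul_of_nonneg_left h2 hσ.le
    rw [div_mul_eq_mul_div, le_div_iff₀ hm]
    have : 2 / η * L = 2 * (1 / η * L) := by ring
    nlinarith
  have q1 : 0 ≤ (1 + 2 / η + 2) / m * L := by positivity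
  have q2 : 0 ≤ 1 / n * L := by positivity
  have q3 : 0 ≤ τ * σ * L := by positivity
  have hKL : K * L = (1 + 2 / η + 2) / m * L + 1 / n * L + τ * σ * L := by rw [hK]; ring
  rw [← Real.sqrt_mul hK0.le]
  refine ⟨Real.le_sqrt_of_sq_le ?_, Real.le_sqrt_of_sq_le ?_, Real.le_sqrt_of_sq_le ?_⟩ <;>
    linarith

/-- Along the iterates the merit function centred at a fixed reference point converges and the
dissipation vanishes. The reference point enters only through feasibility and monotonicity. -/
theorem lyap_converges {f : X → ℝ} {g : Y → ℝ} {gf : X → X} {gg : Y → Y}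
    {Sf Sfh S : X →L[ℝ] X} {Sg Sgh T : Y →L[ℝ] Y}
    (hf_lb : ∀ x x' : X, f x' + ⟪gf x', x - x'⟫ + (1 / 2) * ⟪x - x', Sf (x - x')⟫ ≤ f x)
    (hf_ub : ∀ x x' : X, f x ≤ f x' + ⟪gf x', x - x'⟫ + (1 / 2) * ⟪x - x', Sfh (x - x')⟫)
    (hg_lb : ∀ y y' : Y, g y' + ⟪gg y', y - y'⟫ + (1 / 2) * ⟪y - y', Sg (y - y')⟫ ≤ g y)
    (hg_ub : ∀ y y' : Y, g y ≤ g y' + ⟪gg y', y - y'⟫ + (1 / 2) * ⟪y - y', Sgh (y - y')⟫)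
    {A : X →L[ℝ] Z} {B : Y →L[ℝ] Z} {c : Z} {σ τ η a b : ℝ} (hσ : 0 < σ) (hτ : 0 < τ)
    (hη : 0 < η) (ha : 0 < a) (hb : 0 < b) (hηb : η + b = 2 - τ)
    (hyoung : ∀ r s : Z, -(2 * (1 - τ) * ⟪r, s⟫) ≤ (1 - a) * ‖s‖ ^ 2 + η * ‖r‖ ^ 2)
    (hSf : ∀ u : X, 0 ≤ ⟪u, Sf u⟫) (hSg : ∀ u : Y, 0 ≤ ⟪u, Sg u⟫)
    (hSfh : ∀ u : X, 0 ≤ ⟪u, Sfh u⟫) (hSgh : ∀ u : Y, 0 ≤ ⟪u, Sgh u⟫)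
    (hSgh_sa : ∀ u v : Y, ⟪Sgh u, v⟫ = ⟪u, Sgh v⟫)
    (hSfh_sa : ∀ u v : X, ⟪Sfh u, v⟫ = ⟪u, Sfh v⟫)
    (hS_sa : ∀ u v : X, ⟪S u, v⟫ = ⟪u, S v⟫) (hS : ∀ u : X, 0 ≤ ⟪u, S u⟫)
    (hT_sa : ∀ u v : Y, ⟪T u, v⟫ = ⟪u, T v⟫) (hT : ∀ u : Y, 0 ≤ ⟪u, T u⟫)
    (hM : ∀ u, u ≠ 0 → 0 < ⟪u, (Sfh + S + σ • (ContinuousLinearMap.adjoint A ∘L A)) u⟫)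
    (hN : ∀ u, u ≠ 0 → 0 < ⟪u, (Sgh + T + σ • (ContinuousLinearMap.adjoint B ∘L B)) u⟫)
    {x : ℕ → X} {y : ℕ → Y} {z : ℕ → Z} {dx : ℕ → X} {dy : ℕ → Y}
    (hdx : Summable fun k => ‖dx k‖) (hdy : Summable fun k => ‖dy k‖)
    (hz : ∀ k, z (k + 1) = z k + (τ * σ) • (A (x (k + 1)) + B (y (k + 1)) - c))
    {vx : ℕ → X} {vy : ℕ → Y}
    (hvx : ∀ k, vx k = dx k + (Sfh + S) (x k - x (k + 1)) - gf (x k)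
      - ContinuousLinearMap.adjoint A (z k + σ • (A (x (k + 1)) + B (y k) - c)))
    (hvy : ∀ k, vy k = dy k + (Sgh + T) (y k - y (k + 1)) - gg (y k)
      - ContinuousLinearMap.adjoint B (z k + σ • (A (x (k + 1)) + B (y (k + 1)) - c)))
    (hyy : ∀ k, 0 ≤ ⟪vy k - vy (k + 1), y (k + 1) - y (k + 2)⟫)
    {xb : X} {yb : Y} {zb : Z} (hfeas : A xb + B yb = c)
    (hx : ∀ k, 0 ≤ ⟪vx k - (-gf xb - ContinuousLinearMap.adjoint A zb), x (k + 1) - xb⟫)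
    (hy : ∀ k, 0 ≤ ⟪vy k - (-gg yb - ContinuousLinearMap.adjoint B zb), y (k + 1) - yb⟫) :
    (∃ l, Filter.Tendsto (fun k => lyap (Sfh + S) (Sgh + T) A B σ τ η (x (k + 1) - xb)
      (y (k + 1) - yb) (z (k + 1) - zb) (y k - y (k + 1))) Filter.atTop (nhds l)) ∧
    Filter.Tendsto (fun k => diss Sf S Sg T B σ a b (x (k + 1) - x (k + 2))
      (y (k + 1) - y (k + 2)) (A (x (k + 2)) + B (y (k + 2)) - c)) Filter.atTop (nhds 0) := by
  have hP : ∀ u v : X, ⟪(Sfh + S) u, v⟫ = ⟪u, (Sfh + S) v⟫ := fun u v => by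
    simp only [add_apply, inner_add_left, inner_add_right, hSfh_sa, hS_sa]
  have hR : ∀ u v : Y, ⟪(Sgh + T) u, v⟫ = ⟪u, (Sgh + T) v⟫ := fun u v => by
    simp only [add_apply, inner_add_left, inner_add_right, hSgh_sa, hT_sa]
  have hP0 : ∀ u : X, 0 ≤ ⟪u, (Sfh + S) u⟫ := fun u => by
    rw [add_apply, inner_add_right]; exact add_nonneg (hSfh u) (hS u)
  have hR0 : ∀ u : Y, 0 ≤ ⟪u, (Sgh + T) u⟫ := fun u => by
    rw [add_apply, inner_add_right]; exact add_nonneg (hSgh u) (hT u)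
  obtain ⟨hnn, C, hC, hbd⟩ := lyap_bound hσ hτ hη hP0 hR0 hM hN
  have res : ∀ i j, A (x i - xb) + B (y j - yb) = A (x i) + B (y j) - c := fun i j => by
    rw [← hfeas, map_sub, map_sub]; abel
  have hzz : ∀ k, z (k + 1) - zb = (z k - zb)
      + (τ * σ) • (A (x (k + 1) - xb) + B (y (k + 1) - yb)) := fun k => by
    rw [res, hz]; abel
  refine perturbed_descent
    (δ := fun k => C * (2 * ‖dx (k + 1)‖ + 4 * ‖dy (k + 1)‖ + 2 * ‖dy k‖))
    (fun k => hnn _ _ _ _) (fun k => ?_) (fun k => by positivity) ?_ (fun k => ?_)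
  · have h1 := hS (x (k + 1) - x (k + 2))
    have h2 := hSf (x (k + 1) - x (k + 2))
    have h3 := hT (y (k + 1) - y (k + 2))
    have h4 := hSg (y (k + 1) - y (k + 2))
    unfold diss
    positivity
  · exact ((((summable_nat_add_iff 1).2 hdx).mul_left 2).add
      (((summable_nat_add_iff 1).2 hdy).mul_left 4)).add (hdy.mul_left 2) |>.mul_left C
  · have e1 : ∀ i j, x i - xb - (x j - xb) = x i - x j := fun i j => by abel
    have e2 : ∀ i j, y i - yb - (y j - yb) = y i - y j := fun i j => by abel
    have key := lyap_step (Sf := Sf) (Sfh := Sfh) (S := S) (Sg := Sg) (Sgh := Sgh) (T := T)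
      (A := A) (B := B) (a := a) hσ hτ hηb hyoung hSf hSg hP hR hT_sa hT
      (u := x (k + 1) - xb) (u' := x (k + 2) - xb) (dx := dx (k + 1))
      (G := gf (x (k + 1)) - gf xb) (e := y k - y (k + 1)) (v := y (k + 1) - yb)
      (v' := y (k + 2) - yb) (dy₀ := dy k) (dy := dy (k + 1))
      (H := gg (y (k + 1)) - gg yb) (g := gg (y k)) (g' := gg (y (k + 1)))
      (hzz k) (hzz (k + 1)) ?_ ?_ ?_ ?_ ?_ ?_
    · rw [e1, e2, res] at key
      refine key.trans ?_
      gcongr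
      obtain ⟨-, b2, -⟩ := hbd (x (k + 1) - xb) (y (k + 1) - yb) (z (k + 1) - zb) (y k - y (k + 1))
      obtain ⟨b3, b4, -⟩ := hbd (x (k + 2) - xb) (y (k + 2) - yb) (z (k + 2) - zb)
        (y (k + 1) - y (k + 2))
      have s1 := Real.sqrt_nonneg (lyap (Sfh + S) (Sgh + T) A B σ τ η (x (k + 1) - xb)
        (y (k + 1) - yb) (z (k + 1) - zb) (y k - y (k + 1)))
      have s2 := Real.sqrt_nonneg (lyap (Sfh + S) (Sgh + T) A B σ τ η (x (k + 2) - xb)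
        (y (k + 2) - yb) (z (k + 2) - zb) (y (k + 1) - y (k + 2)))
      set r1 := √(lyap (Sfh + S) (Sgh + T) A B σ τ η (x (k + 1) - xb)
        (y (k + 1) - yb) (z (k + 1) - zb) (y k - y (k + 1)))
      set r2 := √(lyap (Sfh + S) (Sgh + T) A B σ τ η (x (k + 2) - xb)
        (y (k + 2) - yb) (z (k + 2) - zb) (y (k + 1) - y (k + 2)))
      have s1' : 0 ≤ C * r1 := by positivity
      calc _ ≤ 2 * ‖dx (k + 1)‖ * (C * r1 + C * r2) + 2 * ‖dy (k + 1)‖ * (C * r1 + C * r2)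
            + 2 * (‖dy (k + 1)‖ + ‖dy k‖) * (C * r1 + C * r2) := by
            gcongr <;> linarith
        _ = _ := by ring
    · rw [res, e1]
      have := hx (k + 1)
      rw [hvx] at this
      convert this using 2
      simp only [map_sub, map_add]
      abel
    · rw [res, e2]
      have := hy (k + 1)
      rw [hvy] at this
      convert this using 2
      simp only [map_sub, map_add]
      abel
    · rw [res, res, e2]
      have := hyy k
      rw [hvy, hvy] at this
      convert this using 2
      simp only [map_sub, map_add]
      abel
    · rw [e1]
      exact grad_three_point hf_lb hf_ub _ _ _
    · rw [e2]
      exact grad_three_point hg_lb hg_ub _ _ _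
    · rw [e2]
      exact grad_cocoercive hSgh_sa hg_lb hg_ub _ _ _

end ImsPADMM

/-! ### Convergence of the iterates -/

/-- Theorem 1 of the paper: global convergence of the imsPADMM.  Under the imsPADMM setup,
if a KKT point exists and `Σ_f + S + σA*A` and `Σ_g + T + σB*B` are positive definite, the
iterate sequence `(x^k, y^k, z^k)` converges, and its limit is a KKT point. -/
theorem stmt_15
    {X Y Z : Type*}
    [NormedAddCommGroup X] [InnerProductSpace ℝ X] [FiniteDimensional ℝ X]
    [NormedAddCommGroup Y] [InnerProductSpace ℝ Y] [FiniteDimensional ℝ Y]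
    [NormedAddCommGroup Z] [InnerProductSpace ℝ Z] [FiniteDimensional ℝ Z]
    (p : X → EReal) (q : Y → EReal)
    (hp_lsc : LowerSemicontinuous p) (hq_lsc : LowerSemicontinuous q)
    (hp_conv : ∀ x x' : X, ∀ t : ℝ, 0 ≤ t → t ≤ 1 →
      p (t • x + (1 - t) • x') ≤ (t : EReal) * p x + ((1 - t : ℝ) : EReal) * p x')
    (hq_conv : ∀ y y' : Y, ∀ t : ℝ, 0 ≤ t → t ≤ 1 →
      q (t • y + (1 - t) • y') ≤ (t : EReal) * q y + ((1 - t : ℝ) : EReal) * q y')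
    (f : X → ℝ) (g : Y → ℝ) (hf : Differentiable ℝ f) (hg : Differentiable ℝ g)
    (Sf Sfh : X →L[ℝ] X) (Sg Sgh : Y →L[ℝ] Y)
    (hSf_sa : ∀ u v : X, ⟪Sf u, v⟫ = ⟪u, Sf v⟫) (hSf_psd : ∀ u : X, 0 ≤ ⟪u, Sf u⟫)
    (hSfh_sa : ∀ u v : X, ⟪Sfh u, v⟫ = ⟪u, Sfh v⟫) (hSfh_psd : ∀ u : X, 0 ≤ ⟪u, Sfh u⟫)
    (hSg_sa : ∀ u v : Y, ⟪Sg u, v⟫ = ⟪u, Sg v⟫) (hSg_psd : ∀ u : Y, 0 ≤ ⟪u, Sg u⟫)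
    (hSgh_sa : ∀ u v : Y, ⟪Sgh u, v⟫ = ⟪u, Sgh v⟫) (hSgh_psd : ∀ u : Y, 0 ≤ ⟪u, Sgh u⟫)
    (hf_lb : ∀ x x' : X,
      f x' + ⟪gradient f x', x - x'⟫ + (1 / 2) * ⟪x - x', Sf (x - x')⟫ ≤ f x)
    (hf_ub : ∀ x x' : X,
      f x ≤ f x' + ⟪gradient f x', x - x'⟫ + (1 / 2) * ⟪x - x', Sfh (x - x')⟫)
    (hg_lb : ∀ y y' : Y,
      g y' + ⟪gradient g y', y - y'⟫ + (1 / 2) * ⟪y - y', Sg (y - y')⟫ ≤ g y)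
    (hg_ub : ∀ y y' : Y,
      g y ≤ g y' + ⟪gradient g y', y - y'⟫ + (1 / 2) * ⟪y - y', Sgh (y - y')⟫)
    (A : X →L[ℝ] Z) (B : Y →L[ℝ] Z) (c : Z) (σ τ : ℝ)
    (hσ : 0 < σ) (hτ0 : 0 < τ) (hτ1 : τ < (1 + Real.sqrt 5) / 2)
    (S : X →L[ℝ] X) (T : Y →L[ℝ] Y)
    (hS_sa : ∀ u v : X, ⟪S u, v⟫ = ⟪u, S v⟫) (hS_psd : ∀ u : X, 0 ≤ ⟪u, S u⟫)
    (hT_sa : ∀ u v : Y, ⟪T u, v⟫ = ⟪u, T v⟫) (hT_psd : ∀ u : Y, 0 ≤ ⟪u, T u⟫)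
    (M Msqrt Minvsqrt : X →L[ℝ] X) (N Nsqrt Ninvsqrt : Y →L[ℝ] Y)
    (hMdef : M = Sfh + S + σ • (ContinuousLinearMap.adjoint A ∘L A))
    (hNdef : N = Sgh + T + σ • (ContinuousLinearMap.adjoint B ∘L B))
    (hM_pos : ∀ u : X, u ≠ 0 → 0 < ⟪u, M u⟫)
    (hN_pos : ∀ u : Y, u ≠ 0 → 0 < ⟪u, N u⟫)
    (hMsqrt_sa : ∀ u v : X, ⟪Msqrt u, v⟫ = ⟪u, Msqrt v⟫)
    (hMsqrt_psd : ∀ u : X, 0 ≤ ⟪u, Msqrt u⟫)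
    (hMsqrt_sq : Msqrt ∘L Msqrt = M)
    (hMinv1 : Minvsqrt ∘L Msqrt = ContinuousLinearMap.id ℝ X)
    (hMinv2 : Msqrt ∘L Minvsqrt = ContinuousLinearMap.id ℝ X)
    (hNsqrt_sa : ∀ u v : Y, ⟪Nsqrt u, v⟫ = ⟪u, Nsqrt v⟫)
    (hNsqrt_psd : ∀ u : Y, 0 ≤ ⟪u, Nsqrt u⟫)
    (hNsqrt_sq : Nsqrt ∘L Nsqrt = N)
    (hNinv1 : Ninvsqrt ∘L Nsqrt = ContinuousLinearMap.id ℝ Y)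
    (hNinv2 : Nsqrt ∘L Ninvsqrt = ContinuousLinearMap.id ℝ Y)
    (ε : ℕ → ℝ) (hε0 : ∀ k, 0 ≤ ε k) (hεsum : Summable ε)
    (x : ℕ → X) (y : ℕ → Y) (z : ℕ → Z) (dx : ℕ → X) (dy : ℕ → Y)
    (lx : ℕ → X) (ly : ℕ → Y)
    (hlx : ∀ k, lx k = M (x k) - gradient f (x k) - ContinuousLinearMap.adjoint A (z k)
      - σ • ContinuousLinearMap.adjoint A (A (x k) + B (y k) - c))
    (hly : ∀ k, ly k = N (y k) - gradient g (y k) - ContinuousLinearMap.adjoint B (z k)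
      - σ • ContinuousLinearMap.adjoint B (A (x (k + 1)) + B (y k) - c))
    (hp_fin : ∀ k, p (x (k + 1)) ≠ ⊤ ∧ p (x (k + 1)) ≠ ⊥)
    (hq_fin : ∀ k, q (y (k + 1)) ≠ ⊤ ∧ q (y (k + 1)) ≠ ⊥)
    (hdx : ∀ k, ‖Minvsqrt (dx k)‖ ≤ ε k)
    (hdy : ∀ k, ‖Ninvsqrt (dy k)‖ ≤ ε k)
    (hxstep : ∀ k, ∀ xx : X,
      p (x (k + 1))
          + (((1 / 2) * ⟪x (k + 1), M (x (k + 1))⟫ - ⟪lx k, x (k + 1)⟫ : ℝ) : EReal)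
          + ((⟪dx k, xx - x (k + 1)⟫ : ℝ) : EReal)
        ≤ p xx + (((1 / 2) * ⟪xx, M xx⟫ - ⟪lx k, xx⟫ : ℝ) : EReal))
    (hystep : ∀ k, ∀ yy : Y,
      q (y (k + 1))
          + (((1 / 2) * ⟪y (k + 1), N (y (k + 1))⟫ - ⟪ly k, y (k + 1)⟫ : ℝ) : EReal)
          + ((⟪dy k, yy - y (k + 1)⟫ : ℝ) : EReal)
        ≤ q yy + (((1 / 2) * ⟪yy, N yy⟫ - ⟪ly k, yy⟫ : ℝ) : EReal))
    (hzstep : ∀ k, z (k + 1) = z k + (τ * σ) • (A (x (k + 1)) + B (y (k + 1)) - c))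
    (α αh β ρ : ℝ)
    (hα : α = (1 / 2) * (1 + τ / min (1 + τ) (1 + 1 / τ)))
    (hαh : αh = 1 - α * min τ (1 / τ))
    (hβ : β = min 1 (1 - τ + 1 / τ) * α - (1 - α) * τ)
    (hρ : ρ = min τ (1 + τ - τ ^ 2))
    (hkkt_exists : ∃ (xbar : X) (ybar : Y) (zbar : Z),
      A xbar + B ybar = c ∧ p xbar ≠ ⊤ ∧ p xbar ≠ ⊥ ∧ q ybar ≠ ⊤ ∧ q ybar ≠ ⊥ ∧
      (∀ xx : X,
        p xbar + ((⟪-gradient f xbar - ContinuousLinearMap.adjoint A zbar, xx - xbar⟫ : ℝ)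
          : EReal) ≤ p xx) ∧
      (∀ yy : Y,
        q ybar + ((⟪-gradient g ybar - ContinuousLinearMap.adjoint B zbar, yy - ybar⟫ : ℝ)
          : EReal) ≤ q yy))
    (hSf_pos : ∀ u : X, u ≠ 0 →
      0 < ⟪u, (Sf + S + σ • (ContinuousLinearMap.adjoint A ∘L A)) u⟫)
    (hSg_pos : ∀ u : Y, u ≠ 0 →
      0 < ⟪u, (Sg + T + σ • (ContinuousLinearMap.adjoint B ∘L B)) u⟫) :
    ∃ (xl : X) (yl : Y) (zl : Z),
      Filter.Tendsto x Filter.atTop (nhds xl) ∧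
      Filter.Tendsto y Filter.atTop (nhds yl) ∧
      Filter.Tendsto z Filter.atTop (nhds zl) ∧
      A xl + B yl = c ∧ p xl ≠ ⊤ ∧ p xl ≠ ⊥ ∧ q yl ≠ ⊤ ∧ q yl ≠ ⊥ ∧
      (∀ xx : X,
        p xl + ((⟪-gradient f xl - ContinuousLinearMap.adjoint A zl, xx - xl⟫ : ℝ)
          : EReal) ≤ p xx) ∧
      (∀ yy : Y,
        q yl + ((⟪-gradient g yl - ContinuousLinearMap.adjoint B zl, yy - yl⟫ : ℝ)
          : EReal) ≤ q yy) := by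
  have hdx' : Summable fun k => ‖dx k‖ := by
    refine Summable.of_nonneg_of_le (fun k => norm_nonneg _) (fun k => ?_)
      (hεsum.mul_left ‖Msqrt‖)
    have e : Msqrt (Minvsqrt (dx k)) = dx k := DFunLike.congr_fun hMinv2 (dx k)
    calc ‖dx k‖ = ‖Msqrt (Minvsqrt (dx k))‖ := by rw [e]
      _ ≤ ‖Msqrt‖ * ‖Minvsqrt (dx k)‖ := Msqrt.le_opNorm _
      _ ≤ _ := by gcongr; exact hdx k
  have hdy' : Summable fun k => ‖dy k‖ := by
    refine Summable.of_nonneg_of_le (fun k => norm_nonneg _) (fun k => ?_)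
      (hεsum.mul_left ‖Nsqrt‖)
    have e : Nsqrt (Ninvsqrt (dy k)) = dy k := DFunLike.congr_fun hNinv2 (dy k)
    calc ‖dy k‖ = ‖Nsqrt (Ninvsqrt (dy k))‖ := by rw [e]
      _ ≤ ‖Nsqrt‖ * ‖Ninvsqrt (dy k)‖ := Nsqrt.le_opNorm _
      _ ≤ _ := by gcongr; exact hdy k
  have hM_sa : ∀ u v : X, ⟪M u, v⟫ = ⟪u, M v⟫ := fun u v => by
    simp only [← hMsqrt_sq, ContinuousLinearMap.comp_apply, hMsqrt_sa]
  have hN_sa : ∀ u v : Y, ⟪N u, v⟫ = ⟪u, N v⟫ := fun u v => by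
    simp only [← hNsqrt_sq, ContinuousLinearMap.comp_apply, hNsqrt_sa]
  -- The subgradients produced by the two proximal steps.
  obtain ⟨vx, hvx⟩ : ∃ vx : ℕ → X, ∀ k, vx k = dx k + (Sfh + S) (x k - x (k + 1))
      - gradient f (x k)
      - ContinuousLinearMap.adjoint A (z k + σ • (A (x (k + 1)) + B (y k) - c)) :=
    ⟨_, fun _ => rfl⟩
  obtain ⟨vy, hvy⟩ : ∃ vy : ℕ → Y, ∀ k, vy k = dy k + (Sgh + T) (y k - y (k + 1))
      - gradient g (y k)
      - ContinuousLinearMap.adjoint B (z k + σ • (A (x (k + 1)) + B (y (k + 1)) - c)) :=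
    ⟨_, fun _ => rfl⟩
  have hsx : ∀ k, ImsPADMM.SubgradAt p (x (k + 1)) (vx k) := fun k => by
    have h := ImsPADMM.subgrad_of_step hp_conv hM_sa (hp_fin k).1 (hp_fin k).2 (hxstep k)
    convert h using 1
    rw [hvx, hlx, hMdef]
    simp only [add_apply, smul_apply, ContinuousLinearMap.comp_apply,
      map_add, map_sub, map_smul]
    module
  have hsy : ∀ k, ImsPADMM.SubgradAt q (y (k + 1)) (vy k) := fun k => by
    have h := ImsPADMM.subgrad_of_step hq_conv hN_sa (hq_fin k).1 (hq_fin k).2 (hystep k)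
    convert h using 1
    rw [hvy, hly, hNdef]
    simp only [add_apply, smul_apply, ContinuousLinearMap.comp_apply,
      map_add, map_sub, map_smul]
    module
  obtain ⟨η, a, b, hη, ha, hb, hηb, hyoung⟩ := ImsPADMM.young_weights (Z := Z) hτ0 hτ1
  have hP0 : ∀ u : X, 0 ≤ ⟪u, (Sfh + S) u⟫ := fun u => by
    rw [add_apply, inner_add_right]; exact add_nonneg (hSfh_psd u) (hS_psd u)
  have hR0 : ∀ u : Y, 0 ≤ ⟪u, (Sgh + T) u⟫ := fun u => by
    rw [add_apply, inner_add_right]; exact add_nonneg (hSgh_psd u) (hT_psd u)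
  rw [hMdef] at hM_pos
  rw [hNdef] at hN_pos
  obtain ⟨hnn, C, hC, hbd⟩ := ImsPADMM.lyap_bound hσ hτ0 hη hP0 hR0 hM_pos hN_pos
  have key : ∀ (xb : X) (yb : Y) (zb : Z), A xb + B yb = c → p xb ≠ ⊤ → p xb ≠ ⊥ →
      q yb ≠ ⊤ → q yb ≠ ⊥ →
      ImsPADMM.SubgradAt p xb (-gradient f xb - ContinuousLinearMap.adjoint A zb) →
      ImsPADMM.SubgradAt q yb (-gradient g yb - ContinuousLinearMap.adjoint B zb) → _ :=
    fun xb yb zb h1 h2 h3 h4 h5 h6 h7 =>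
    ImsPADMM.lyap_converges hf_lb hf_ub hg_lb hg_ub hσ hτ0 hη ha hb hηb hyoung hSf_psd hSg_psd
      hSfh_psd hSgh_psd hSgh_sa hSfh_sa hS_sa hS_psd hT_sa hT_psd hM_pos hN_pos hdx' hdy' hzstep
      hvx hvy
      (fun k => (hsy k).monotone (hsy (k + 1)) (hq_fin k).1 (hq_fin k).2
        (hq_fin (k + 1)).1 (hq_fin (k + 1)).2) (xb := xb) (yb := yb) (zb := zb) h1
      (fun k => (hsx k).monotone h6 (hp_fin k).1 (hp_fin k).2 h2 h3)
      (fun k => (hsy k).monotone h7 (hq_fin k).1 (hq_fin k).2 h4 h5)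
  obtain ⟨xb, yb, zb, k1, k2, k3, k4, k5, k6, k7⟩ := hkkt_exists
  obtain ⟨⟨l, hl⟩, hD⟩ := key xb yb zb k1 k2 k3 k4 k5 k6 k7
  -- The dissipation controls `r` and `B Δy`; these give `A Δx`, and positive definiteness then gives
  -- `Δx` and `Δy`.
  have nn1 := fun k => hS_psd (x (k + 1) - x (k + 2))
  have nn2 := fun k => hSf_psd (x (k + 1) - x (k + 2))
  have nn3 := fun k => hT_psd (y (k + 1) - y (k + 2))
  have nn4 := fun k => hSg_psd (y (k + 1) - y (k + 2))
  have nn5 : ∀ k, 0 ≤ a * σ * ‖B (y (k + 1) - y (k + 2))‖ ^ 2 := fun k => by positivity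
  have nn6 : ∀ k, 0 ≤ b * σ * ‖A (x (k + 2)) + B (y (k + 2)) - c‖ ^ 2 := fun k => by positivity
  have hr2 : Filter.Tendsto (fun k => A (x (k + 2)) + B (y (k + 2)) - c) Filter.atTop (nhds 0) :=
    ImsPADMM.tendsto_zero_of_sq_le (mul_pos hb hσ) (fun k => by
      unfold ImsPADMM.diss
      linarith [nn1 k, nn2 k, nn3 k, nn4 k, nn5 k]) hD
  have hr1 : Filter.Tendsto (fun k => A (x (k + 1)) + B (y (k + 1)) - c) Filter.atTop (nhds 0) :=
    (Filter.tendsto_add_atTop_iff_nat (f := fun k => A (x (k + 1)) + B (y (k + 1)) - c) 1).1 hr2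
  have hBt : Filter.Tendsto (fun k => B (y (k + 1) - y (k + 2))) Filter.atTop (nhds 0) :=
    ImsPADMM.tendsto_zero_of_sq_le (mul_pos ha hσ) (fun k => by
      unfold ImsPADMM.diss
      linarith [nn1 k, nn2 k, nn3 k, nn4 k, nn6 k]) hD
  have hAs : Filter.Tendsto (fun k => A (x (k + 1) - x (k + 2))) Filter.atTop (nhds 0) := by
    have h := (hr1.sub hr2).sub hBt
    simp only [sub_zero] at h
    refine h.congr fun k => ?_
    simp only [map_sub]
    abel
  have hs : Filter.Tendsto (fun k => x (k + 1) - x (k + 2)) Filter.atTop (nhds 0) := by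
    obtain ⟨m, hm, hm'⟩ := ImsPADMM.coercive _ hSf_pos
    have h := (hD.const_mul 2).add ((hAs.norm.pow 2).const_mul σ)
    simp only [norm_zero, ne_eq, OfNat.ofNat_ne_zero, not_false_eq_true, zero_pow, mul_zero,
      add_zero] at h
    refine ImsPADMM.tendsto_zero_of_sq_le hm (fun k => (hm' _).trans ?_) h
    rw [add_apply, add_apply, smul_apply, ContinuousLinearMap.comp_apply, inner_add_right,
      inner_add_right, inner_smul_right, ContinuousLinearMap.adjoint_inner_right,
      real_inner_self_eq_norm_sq]
    unfold ImsPADMM.diss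
    linarith [nn1 k, nn2 k, nn3 k, nn4 k, nn5 k, nn6 k]
  have ht : Filter.Tendsto (fun k => y (k + 1) - y (k + 2)) Filter.atTop (nhds 0) := by
    obtain ⟨m, hm, hm'⟩ := ImsPADMM.coercive _ hSg_pos
    have h := (hD.const_mul 2).add ((hBt.norm.pow 2).const_mul σ)
    simp only [norm_zero, ne_eq, OfNat.ofNat_ne_zero, not_false_eq_true, zero_pow, mul_zero,
      add_zero] at h
    refine ImsPADMM.tendsto_zero_of_sq_le hm (fun k => (hm' _).trans ?_) h
    rw [add_apply, add_apply, smul_apply, ContinuousLinearMap.comp_apply, inner_add_right,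
      inner_add_right, inner_smul_right, ContinuousLinearMap.adjoint_inner_right,
      real_inner_self_eq_norm_sq]
    unfold ImsPADMM.diss
    linarith [nn1 k, nn2 k, nn3 k, nn4 k, nn5 k, nn6 k]
  have ht0 : Filter.Tendsto (fun k => y k - y (k + 1)) Filter.atTop (nhds 0) :=
    (Filter.tendsto_add_atTop_iff_nat (f := fun k => y k - y (k + 1)) 1).1 ht
  -- The merit function is bounded along the iterates, so these stay in a compact set.
  obtain ⟨L, hL⟩ := hl.bddAbove_range
  have hbdL := fun k => hL (Set.mem_range_self k)
  have hcpt := (isCompact_closedBall xb (C * √L)).prod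
    ((isCompact_closedBall yb (C * √L)).prod (isCompact_closedBall zb (C * √L)))
  obtain ⟨⟨xl, yl, zl⟩, -, φ, hφ, hlim⟩ := hcpt.tendsto_subseq
    (x := fun k => (x (k + 1), y (k + 1), z (k + 1))) (fun k => by
      obtain ⟨b1, b2, b3⟩ := hbd (x (k + 1) - xb) (y (k + 1) - yb) (z (k + 1) - zb)
        (y k - y (k + 1))
      have := mul_le_mul_of_nonneg_left (Real.sqrt_le_sqrt (hbdL k)) hC.le
      refine ⟨?_, ?_, ?_⟩ <;> rw [mem_closedBall_iff_norm]
      exacts [b1.trans this, b2.trans this, b3.trans this])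
  have hφt := hφ.tendsto_atTop
  have lx1 : Filter.Tendsto (fun j => x (φ j + 1)) Filter.atTop (nhds xl) :=
    (continuous_fst.tendsto _).comp hlim
  have ly1 : Filter.Tendsto (fun j => y (φ j + 1)) Filter.atTop (nhds yl) :=
    ((continuous_fst.comp continuous_snd).tendsto _).comp hlim
  have lz1 : Filter.Tendsto (fun j => z (φ j + 1)) Filter.atTop (nhds zl) :=
    ((continuous_snd.comp continuous_snd).tendsto _).comp hlim
  have lx2 : Filter.Tendsto (fun j => x (φ j + 2)) Filter.atTop (nhds xl) := by
    have h := lx1.sub (hs.comp hφt)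
    rw [sub_zero] at h
    exact h.congr fun j => sub_sub_cancel _ _
  have ly2 : Filter.Tendsto (fun j => y (φ j + 2)) Filter.atTop (nhds yl) := by
    have h := ly1.sub (ht.comp hφt)
    rw [sub_zero] at h
    exact h.congr fun j => sub_sub_cancel _ _
  have hfeas : A xl + B yl = c := by
    have h1 : Filter.Tendsto (fun j => A (x (φ j + 1)) + B (y (φ j + 1)) - c) Filter.atTop
        (nhds (A xl + B yl - c)) :=
      (((A.continuous.tendsto _).comp lx1).add ((B.continuous.tendsto _).comp ly1)).sub
        tendsto_const_nhds
    exact sub_eq_zero.1 (tendsto_nhds_unique h1 (hr1.comp hφt))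
  have hφt1 : Filter.Tendsto (fun j => φ j + 1) Filter.atTop Filter.atTop :=
    (Filter.tendsto_add_atTop_nat 1).comp hφt
  have hgf := ImsPADMM.grad_continuous hSf_psd hf_lb hf_ub
  have hgg := ImsPADMM.grad_continuous hSg_psd hg_lb hg_ub
  have hvxl : Filter.Tendsto (fun j => vx (φ j + 1)) Filter.atTop
      (nhds (-gradient f xl - ContinuousLinearMap.adjoint A zl)) := by
    have d0 := (tendsto_zero_iff_norm_tendsto_zero.2 hdx'.tendsto_atTop_zero).comp hφt1
    have d1 := ((Sfh + S).continuous.tendsto _).comp (hs.comp hφt)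
    have d2 := (hgf.tendsto _).comp lx1
    have d3 := ((((A.continuous.tendsto _).comp lx2).add
      ((B.continuous.tendsto _).comp ly1)).sub (tendsto_const_nhds (x := c))).const_smul σ
    have d4 := ((ContinuousLinearMap.adjoint A).continuous.tendsto _).comp (lz1.add d3)
    have d5 := ((d0.add d1).sub d2).sub d4
    rw [hfeas] at d5
    simp only [map_zero, add_zero, zero_sub, sub_self, smul_zero] at d5
    exact d5.congr fun j => (hvx _).symm
  have hvyl : Filter.Tendsto (fun j => vy (φ j + 1)) Filter.atTop
      (nhds (-gradient g yl - ContinuousLinearMap.adjoint B zl)) := by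
    have d0 := (tendsto_zero_iff_norm_tendsto_zero.2 hdy'.tendsto_atTop_zero).comp hφt1
    have d1 := ((Sgh + T).continuous.tendsto _).comp (ht.comp hφt)
    have d2 := (hgg.tendsto _).comp ly1
    have d3 := ((((A.continuous.tendsto _).comp lx2).add
      ((B.continuous.tendsto _).comp ly2)).sub (tendsto_const_nhds (x := c))).const_smul σ
    have d4 := ((ContinuousLinearMap.adjoint B).continuous.tendsto _).comp (lz1.add d3)
    have d5 := ((d0.add d1).sub d2).sub d4
    rw [hfeas] at d5
    simp only [map_zero, add_zero, zero_sub, sub_self, smul_zero] at d5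
    exact d5.congr fun j => (hvy _).symm
  obtain ⟨px1, px2, px3⟩ := ImsPADMM.SubgradAt.of_tendsto hp_lsc lx2 hvxl
    (fun j => hsx (φ j + 1)) (fun j => (hp_fin (φ j + 1)).1) (fun j => (hp_fin (φ j + 1)).2)
  obtain ⟨qy1, qy2, qy3⟩ := ImsPADMM.SubgradAt.of_tendsto hq_lsc ly2 hvyl
    (fun j => hsy (φ j + 1)) (fun j => (hq_fin (φ j + 1)).1) (fun j => (hq_fin (φ j + 1)).2)
  -- The merit function centred at the cluster point converges, and to zero along the subsequence.
  obtain ⟨⟨l', hl'⟩, -⟩ := key xl yl zl hfeas px1 px2 qy1 qy2 px3 qy3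
  have hl0 : l' = 0 := by
    have hcont : Continuous (fun w : X × Y × Z × Y =>
        ImsPADMM.lyap (Sfh + S) (Sgh + T) A B σ τ η w.1 w.2.1 w.2.2.1 w.2.2.2) := by
      unfold ImsPADMM.lyap
      fun_prop
    have h1 := (hcont.tendsto _).comp ((lx1.sub_const xl).prodMk_nhds
      ((ly1.sub_const yl).prodMk_nhds ((lz1.sub_const zl).prodMk_nhds (ht0.comp hφt))))
    have h2 := tendsto_nhds_unique (hl'.comp hφt) h1
    rw [h2]
    simp [ImsPADMM.lyap]
  rw [hl0] at hl'
  have hsq := hl'.sqrt.const_mul C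
  rw [Real.sqrt_zero, mul_zero] at hsq
  have fx : Filter.Tendsto x Filter.atTop (nhds xl) :=
    (Filter.tendsto_add_atTop_iff_nat 1).1
      (tendsto_sub_nhds_zero_iff.1 (squeeze_zero_norm (fun k => (hbd _ _ _ _).1) hsq))
  have fy : Filter.Tendsto y Filter.atTop (nhds yl) :=
    (Filter.tendsto_add_atTop_iff_nat 1).1
      (tendsto_sub_nhds_zero_iff.1 (squeeze_zero_norm (fun k => (hbd _ _ _ _).2.1) hsq))
  have fz : Filter.Tendsto z Filter.atTop (nhds zl) :=
    (Filter.tendsto_add_atTop_iff_nat 1).1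
      (tendsto_sub_nhds_zero_iff.1 (squeeze_zero_norm (fun k => (hbd _ _ _ _).2.2) hsq))
  exact ⟨xl, yl, zl, fx, fy, fz, hfeas, px1, px2, qy1, qy2, px3, qy3⟩
end
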